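/- arXiv:1306.3637 — 2 statements merged into one kernel-verified Lean document; each statement's English description precedes it below -/
import Mathlib

section
/- Let L = 2π. There exists δ > 0 such that for every λ ∈ ℂ with λ ≠ 0 that admits a nonzero eigenfunction, i.e. a φ ∈ H³((0,2π);ℂ), φ ≢ 0, with λφ + φ′ + φ‴ = 0 on (0,2π) and φ(0) = φ(2π) = φ′(2π) = 0, one has Re λ ≤ −δ. In other words, 0 is an eigenvalue of the linear KdV operator A, and every other eigenvalue has real part bounded away from 0. -/
open Set Real

/-- `(lam, φ)` is an eigenpair of the linear KdV operator `A φ = −φ′ − φ‴` on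
`(0,2π)` with domain boundary conditions `φ(0) = φ(2π) = φ′(2π) = 0`: `φ` is `C³`
on `[0,2π]`, not identically zero, and `lam φ + φ′ + φ‴ = 0` on `(0,2π)`. -/
def IsKdVEigenpair (lam : ℂ) (φ : ℝ → ℂ) : Prop :=
  ContDiffOn ℝ 3 φ (Icc (0:ℝ) (2 * Real.pi)) ∧
  (∃ x ∈ Icc (0:ℝ) (2 * Real.pi), φ x ≠ 0) ∧
  (∀ x ∈ Ioo (0:ℝ) (2 * Real.pi),
    lam * φ x + derivWithin φ (Icc (0:ℝ) (2 * Real.pi)) x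
      + iteratedDerivWithin 3 φ (Icc (0:ℝ) (2 * Real.pi)) x = 0) ∧
  φ 0 = 0 ∧ φ (2 * Real.pi) = 0 ∧
  derivWithin φ (Icc (0:ℝ) (2 * Real.pi)) (2 * Real.pi) = 0

/-! With `E = ∫ |φ|²`, pairing the equation with `x φ` gives
`Re λ ∫ x |φ|² = (1/2) E - (3/2) ∫ |φ′|²`. Since `∫ x |φ|² ≤ 2π E`, a negative upper bound on `Re λ`
follows as soon as `∫ |φ′|² ≥ c E` for some `c > 1/3`. The Dirichlet conditions alone only give
`c = 1/4`. However, `1 - cos` spans the kernel of the adjoint operator, so for `λ ≠ 0` the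
eigenfunction is orthogonal to it; this bounds the zeroth Fourier coefficient of `φ` by those of
order `±1`, and Parseval's identity then gives `c = 2/3`. -/

open MeasureTheory

lemma memLp_restrict_of_continuousOn_isCompact {X F : Type*} [TopologicalSpace X]
    [MeasurableSpace X] [OpensMeasurableSpace X] [TopologicalSpace.PseudoMetrizableSpace X]
    [NormedAddCommGroup F] {μ : Measure X} [IsFiniteMeasureOnCompacts μ] {s K : Set X} {f : X → F}
    (hK : IsCompact K) (hKm : MeasurableSet K) (hsK : s ⊆ K) (hf : ContinuousOn f K)
    (p : ENNReal) : MemLp f p (μ.restrict s) := by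
  obtain ⟨C, hC⟩ := hK.exists_bound_of_continuousOn hf
  have : IsFiniteMeasure (μ.restrict K) := isFiniteMeasure_restrict.2 hK.measure_ne_top
  have memLp_restrict : MemLp f p (μ.restrict K) :=
    MemLp.of_bound (hf.aestronglyMeasurable_of_isCompact hK hKm) C
      (ae_restrict_of_forall_mem hKm hC)
  exact memLp_restrict.mono_measure (Measure.restrict_mono hsK le_rfl)

section Fourier

variable {a b : ℝ} {E : Type*} [NormedAddCommGroup E] [NormedSpace ℂ E]

lemma fourier_add_fourier_neg {T : ℝ} (n : ℤ) (x : ℝ) :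
    fourier n (x : AddCircle T) + fourier (-n) (x : AddCircle T)
      = ((2 * cos (2 * π * n * x / T) : ℝ) : ℂ) := by
  simp only [fourier_coe_apply, Complex.ofReal_mul, Complex.ofReal_ofNat, Complex.ofReal_cos,
    Complex.two_cos]
  congr 2 <;> push_cast <;> ring

lemma intervalIntegrable_fourier_smul {f : ℝ → E} (hf : IntervalIntegrable f volume a b) (T : ℝ)
    (n : ℤ) : IntervalIntegrable (fun x : ℝ ↦ fourier n (x : AddCircle T) • f x) volume a b :=
  hf.continuousOn_smul
    ((map_continuous (fourier n)).comp (AddCircle.continuous_mk' T)).continuousOn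

lemma fourierCoeffOn_add_fourierCoeffOn_neg (hab : a < b) {f : ℝ → E}
    (hf : IntervalIntegrable f volume a b) (n : ℤ) :
    fourierCoeffOn hab f n + fourierCoeffOn hab f (-n)
      = (2 / (b - a)) • ∫ x in a..b, cos (2 * π * n * x / (b - a)) • f x := by
  have fourier_smul_add (x : ℝ) : fourier (-n) (x : AddCircle (b - a)) • f x
      + fourier (- -n) (x : AddCircle (b - a)) • f x
      = (2 : ℝ) • cos (2 * π * n * x / (b - a)) • f x := by
    rw [← add_smul, neg_neg, add_comm, fourier_add_fourier_neg, Complex.coe_smul, mul_smul]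
  rw [fourierCoeffOn_eq_integral, fourierCoeffOn_eq_integral, ← smul_add,
    ← intervalIntegral.integral_add (intervalIntegrable_fourier_smul hf _ _)
      (intervalIntegrable_fourier_smul hf _ _)]
  simp only [fourier_smul_add]
  rw [intervalIntegral.integral_smul, smul_smul]
  congr 1
  ring

lemma fourierCoeffOn_one_add_fourierCoeffOn_neg_one (hab : a < b) {f : ℝ → E}
    (hf : IntervalIntegrable f volume a b)
    (horth : ∫ x in a..b, (1 - cos (2 * π * x / (b - a))) • f x = 0) :
    fourierCoeffOn hab f 1 + fourierCoeffOn hab f (-1) = (2 : ℝ) • fourierCoeffOn hab f 0 := by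
  have hcos : IntervalIntegrable (fun x ↦ cos (2 * π * x / (b - a)) • f x) volume a b :=
    hf.continuousOn_smul (by fun_prop)
  have integral_eq : ∫ x in a..b, f x = ∫ x in a..b, cos (2 * π * x / (b - a)) • f x := by
    simpa only [sub_smul, one_smul, intervalIntegral.integral_sub hf hcos, sub_eq_zero] using horth
  have coeff_zero := fourierCoeffOn_add_fourierCoeffOn_neg hab hf 0
  have coeff_one := fourierCoeffOn_add_fourierCoeffOn_neg hab hf 1
  simp only [Int.cast_zero, Int.cast_one, mul_zero, mul_one, zero_mul, zero_div, cos_zero, one_smul,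
    neg_zero] at coeff_zero coeff_one
  rw [coeff_one, ← integral_eq, ← coeff_zero, two_smul]

lemma fourierCoeffOn_of_hasDerivAt_Ioo_of_eq (hab : a < b) {f f' : ℝ → ℂ}
    (hf : ContinuousOn f (Icc a b)) (hff' : ∀ x ∈ Ioo a b, HasDerivAt f (f' x) x)
    (hf' : IntervalIntegrable f' volume a b) (hend : f a = f b) (n : ℤ) :
    fourierCoeffOn hab f' n = 2 * π * Complex.I * n / (b - a) * fourierCoeffOn hab f n := by
  have hT : (b - a : ℂ) ≠ 0 := mod_cast (sub_pos.2 hab).ne'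
  rcases eq_or_ne n 0 with rfl | hn
  · have integral_deriv := intervalIntegral.integral_eq_sub_of_hasDerivAt_of_le hab.le hf hff' hf'
    simp [fourierCoeffOn_eq_integral, integral_deriv, hend]
  · have by_parts := fourierCoeffOn_of_hasDerivAt_Ioo hab hn (by rwa [uIcc_of_le hab.le])
      (by rwa [min_eq_left hab.le, max_eq_right hab.le]) hf'
    have hpi : (π : ℂ) ≠ 0 := mod_cast pi_ne_zero
    have hnC : (n : ℂ) ≠ 0 := mod_cast hn
    rw [by_parts, hend, sub_self]
    field_simp
    ring

lemma hasSum_sq_mul_sq_norm_fourierCoeffOn (hab : a < b) {f f' : ℝ → ℂ}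
    (hf : ContinuousOn f (Icc a b)) (hff' : ∀ x ∈ Ioo a b, HasDerivAt f (f' x) x)
    (hf' : MemLp f' 2 (volume.restrict (Ioc a b))) (hend : f a = f b) :
    HasSum (fun n : ℤ ↦ (2 * π * n / (b - a)) ^ 2 * ‖fourierCoeffOn hab f n‖ ^ 2)
      ((b - a)⁻¹ • ∫ x in a..b, ‖f' x‖ ^ 2) := by
  have hf'_int : IntervalIntegrable f' volume a b :=
    (intervalIntegrable_iff_integrableOn_Ioc_of_le hab.le).2 (hf'.integrable one_le_two)
  convert hasSum_sq_fourierCoeffOn hab hf' using 2 with n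
  rw [fourierCoeffOn_of_hasDerivAt_Ioo_of_eq hab hf hff' hf'_int hend, ← Complex.ofReal_sub]
  simp only [norm_mul, norm_div, Complex.norm_real, Complex.norm_I, Complex.norm_ofNat,
    Complex.norm_intCast, mul_pow, div_pow, norm_eq_abs, sq_abs, mul_one]

lemma hasSum_le_mul_of_apply_zero_le {c : ℤ → ℝ} {A B κ : ℝ} (hc : ∀ n, 0 ≤ c n) (hκ : 0 ≤ κ)
    (hA : HasSum c A) (hB : HasSum (fun n ↦ n ^ 2 * c n) B) (h0 : c 0 ≤ κ * (c 1 + c (-1))) :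
    A ≤ (1 + κ) * B := by
  have sum_central_nonneg :
      0 ≤ ∑ n ∈ ({0, 1, -1} : Finset ℤ), ((1 + κ) * (n ^ 2 * c n) - c n) := by
    rw [Finset.sum_insert (by decide), Finset.sum_pair (by decide)]
    push_cast
    linarith
  have term_nonneg : ∀ n ∉ ({0, 1, -1} : Finset ℤ), 0 ≤ (1 + κ) * (n ^ 2 * c n) - c n := by
    intro n hn
    have hn0 : n ≠ 0 := by
      rintro rfl
      simp at hn
    have one_le_sq : (1 : ℝ) ≤ n ^ 2 :=
      mod_cast (one_le_sq_iff_one_le_abs n).2 (Int.one_le_abs hn0)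
    have le_sq_mul : c n ≤ n ^ 2 * c n := le_mul_of_one_le_left (hc n) one_le_sq
    linarith [mul_nonneg hκ ((hc n).trans le_sq_mul)]
  exact sub_nonneg.1 (sum_central_nonneg.trans
    (sum_le_hasSum _ term_nonneg ((hB.mul_left (1 + κ)).sub hA)))

lemma wirtinger_inequality_of_fourierCoeffOn_zero_le (hab : a < b) {f f' : ℝ → ℂ} {κ : ℝ}
    (hκ : 0 ≤ κ) (hf : ContinuousOn f (Icc a b)) (hff' : ∀ x ∈ Ioo a b, HasDerivAt f (f' x) x)
    (hf' : MemLp f' 2 (volume.restrict (Ioc a b))) (hend : f a = f b)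
    (h0 : ‖fourierCoeffOn hab f 0‖ ^ 2
      ≤ κ * (‖fourierCoeffOn hab f 1‖ ^ 2 + ‖fourierCoeffOn hab f (-1)‖ ^ 2)) :
    (2 * π / (b - a)) ^ 2 * ∫ x in a..b, ‖f x‖ ^ 2 ≤ (1 + κ) * ∫ x in a..b, ‖f' x‖ ^ 2 := by
  have hT : 0 < b - a := sub_pos.2 hab
  have hf_memLp : MemLp f 2 (volume.restrict (Ioc a b)) :=
    memLp_restrict_of_continuousOn_isCompact isCompact_Icc measurableSet_Icc
      Ioc_subset_Icc_self hf 2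
  have parseval := (hasSum_sq_fourierCoeffOn hab hf_memLp).mul_left ((2 * π / (b - a)) ^ 2)
  have parseval_deriv : HasSum
      (fun n : ℤ ↦ (n : ℝ) ^ 2 * ((2 * π / (b - a)) ^ 2 * ‖fourierCoeffOn hab f n‖ ^ 2))
      ((b - a)⁻¹ • ∫ x in a..b, ‖f' x‖ ^ 2) := by
    convert hasSum_sq_mul_sq_norm_fourierCoeffOn hab hf hff' hf' hend using 2
    ring
  have scaled_le := hasSum_le_mul_of_apply_zero_le (fun n ↦ by positivity) hκ parseval
    parseval_deriv (by linarith [mul_le_mul_of_nonneg_left h0 (sq_nonneg (2 * π / (b - a)))])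
  refine le_of_mul_le_mul_left ?_ (inv_pos.2 hT)
  simp only [smul_eq_mul] at scaled_le
  linarith

lemma wirtinger_inequality_of_integral_one_sub_cos_smul_eq_zero (hab : a < b) {f f' : ℝ → ℂ}
    (hf : ContinuousOn f (Icc a b)) (hff' : ∀ x ∈ Ioo a b, HasDerivAt f (f' x) x)
    (hf' : MemLp f' 2 (volume.restrict (Ioc a b))) (hend : f a = f b)
    (horth : ∫ x in a..b, (1 - cos (2 * π * x / (b - a))) • f x = 0) :
    (2 * π / (b - a)) ^ 2 * ∫ x in a..b, ‖f x‖ ^ 2 ≤ 3 / 2 * ∫ x in a..b, ‖f' x‖ ^ 2 := by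
  have coeff_zero_le : ‖fourierCoeffOn hab f 0‖ ^ 2
      ≤ 1 / 2 * (‖fourierCoeffOn hab f 1‖ ^ 2 + ‖fourierCoeffOn hab f (-1)‖ ^ 2) := by
    have hf_int := hf.intervalIntegrable_of_Icc (μ := volume) hab.le
    have coeff_add := fourierCoeffOn_one_add_fourierCoeffOn_neg_one hab hf_int horth
    have parallelogram := parallelogram_law_with_norm ℝ
      (fourierCoeffOn hab f 1) (fourierCoeffOn hab f (-1))
    rw [coeff_add, norm_smul, Real.norm_ofNat] at parallelogram
    nlinarith [sq_nonneg ‖fourierCoeffOn hab f 1 - fourierCoeffOn hab f (-1)‖]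
  convert wirtinger_inequality_of_fourierCoeffOn_zero_le hab (by norm_num) hf hff' hf' hend
    coeff_zero_le using 2
  norm_num

end Fourier

section Moment

variable {L : ℝ} {F : Type*} [NormedAddCommGroup F] {f : ℝ → F}

lemma integral_id_mul_norm_sq_pos (hf : ContinuousOn f (Icc 0 L))
    (hne : ∃ x ∈ Ioc 0 L, f x ≠ 0) : 0 < ∫ x in 0..L, x * ‖f x‖ ^ 2 := by
  obtain ⟨x, ⟨hx0, hxL⟩, hfx⟩ := hne
  exact intervalIntegral.integral_pos (hx0.trans_le hxL) (by fun_prop)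
    (fun y hy ↦ mul_nonneg hy.1.le (sq_nonneg _)) ⟨x, ⟨hx0.le, hxL⟩, by positivity⟩

lemma integral_id_mul_norm_sq_le (hf : ContinuousOn f (Icc 0 L)) (hL : 0 ≤ L) :
    ∫ x in 0..L, x * ‖f x‖ ^ 2 ≤ L * ∫ x in 0..L, ‖f x‖ ^ 2 := by
  rw [← intervalIntegral.integral_const_mul]
  exact intervalIntegral.integral_mono_on hL
    (ContinuousOn.intervalIntegrable_of_Icc hL (by fun_prop))
    (ContinuousOn.intervalIntegrable_of_Icc hL (by fun_prop))
    fun x hx ↦ mul_le_mul_of_nonneg_right hx.2 (sq_nonneg _)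

end Moment

/-- The eigenvalue problem `lam f + f′ + f‴ = 0`, `f(0) = f(L) = f′(L) = 0` on an interval of
arbitrary length `L`, as a first-order system for `(f, f₁, f₂) = (f, f′, f″)`: `f‴` is eliminated by
the equation, and one-sided derivatives at the endpoints are replaced by continuity. -/
structure IsKdVMode (L : ℝ) (lam : ℂ) (f f₁ f₂ : ℝ → ℂ) : Prop where
  continuousOn : ContinuousOn f (Icc 0 L)
  continuousOn₁ : ContinuousOn f₁ (Icc 0 L)
  continuousOn₂ : ContinuousOn f₂ (Icc 0 L)
  hasDerivAt : ∀ x ∈ Ioo 0 L, HasDerivAt f (f₁ x) x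
  hasDerivAt₁ : ∀ x ∈ Ioo 0 L, HasDerivAt f₁ (f₂ x) x
  hasDerivAt₂ : ∀ x ∈ Ioo 0 L, HasDerivAt f₂ (-(lam * f x) - f₁ x) x
  apply_zero : f 0 = 0
  apply_length : f L = 0
  deriv_length : f₁ L = 0

namespace IsKdVMode

variable {L : ℝ} {lam : ℂ} {f f₁ f₂ : ℝ → ℂ}

lemma mul_integral_one_sub_cos_smul (h : IsKdVMode L lam f f₁ f₂) (hL : 0 ≤ L)
    (hcos : cos L = 1) : lam * ∫ x in 0..L, (1 - cos x) • f x = 0 := by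
  have hf := h.continuousOn
  have hf₁ := h.continuousOn₁
  have hf₂ := h.continuousOn₂
  have primitive : ∀ x ∈ Ioo 0 L,
      HasDerivAt (fun x ↦ (1 - cos x) • f₂ x - sin x • f₁ x + f x)
        (-lam * (1 - cos x) • f x) x := by
    intro x hx
    refine ((((hasDerivAt_cos x).const_sub 1).smul (h.hasDerivAt₂ x hx)).sub
      ((hasDerivAt_sin x).smul (h.hasDerivAt₁ x hx))).add (h.hasDerivAt x hx) |>.congr_deriv ?_
    simp only [Complex.real_smul]
    push_cast
    ring
  have integral_eq := intervalIntegral.integral_eq_sub_of_hasDerivAt_of_le hL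
    (by fun_prop) primitive (ContinuousOn.intervalIntegrable_of_Icc hL (by fun_prop))
  simpa [hcos, h.apply_zero, h.apply_length, h.deriv_length] using integral_eq

lemma re_mul_integral_id_mul_norm_sq (h : IsKdVMode L lam f f₁ f₂) (hL : 0 ≤ L) :
    lam.re * ∫ x in 0..L, x * ‖f x‖ ^ 2
      = 1 / 2 * (∫ x in 0..L, ‖f x‖ ^ 2) - 3 / 2 * ∫ x in 0..L, ‖f₁ x‖ ^ 2 := by
  have hf := h.continuousOn
  have hf₁ := h.continuousOn₁
  have hf₂ := h.continuousOn₂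
  have primitive : ∀ x ∈ Ioo 0 L,
      HasDerivAt
        (fun x ↦ inner ℝ (f₁ x) (f x)
          + x * (‖f₁ x‖ ^ 2 / 2 - ‖f x‖ ^ 2 / 2 - inner ℝ (f₂ x) (f x)))
        (lam.re * (x * ‖f x‖ ^ 2) - (1 / 2 * ‖f x‖ ^ 2 - 3 / 2 * ‖f₁ x‖ ^ 2)) x := by
    intro x hx
    have d := h.hasDerivAt x hx
    have d₁ := h.hasDerivAt₁ x hx
    have d₂ := h.hasDerivAt₂ x hx
    refine (d₁.inner ℝ d).add ((hasDerivAt_id' x).mul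
      (((d₁.norm_sq.div_const 2).sub (d.norm_sq.div_const 2)).sub (d₂.inner ℝ d)))
      |>.congr_deriv ?_
    have inner_mul_self : inner ℝ (lam * f x) (f x) = lam.re * ‖f x‖ ^ 2 := by
      simp only [Complex.inner, Complex.sq_norm, Complex.normSq_apply, map_mul, Complex.mul_re,
        Complex.mul_im, Complex.conj_re, Complex.conj_im]
      ring
    simp only [inner_sub_left, inner_neg_left, inner_mul_self, real_inner_self_eq_norm_sq,
      real_inner_comm (f₁ x) (f₂ x), real_inner_comm (f₁ x) (f x), Pi.sub_apply]
    ring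
  have integral_eq := intervalIntegral.integral_eq_sub_of_hasDerivAt_of_le hL
    (by fun_prop) primitive (ContinuousOn.intervalIntegrable_of_Icc hL (by fun_prop))
  have hint {g : ℝ → ℝ} (hg : ContinuousOn g (Icc 0 L)) : IntervalIntegrable g volume 0 L :=
    hg.intervalIntegrable_of_Icc hL
  rw [intervalIntegral.integral_sub (hint (by fun_prop)) (hint (by fun_prop)),
    intervalIntegral.integral_sub (hint (by fun_prop)) (hint (by fun_prop))] at integral_eq
  simp only [intervalIntegral.integral_const_mul, h.apply_zero, h.apply_length, h.deriv_length,
    inner_zero_right, norm_zero] at integral_eq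
  linarith

lemma re_le_of_mul_integral_le (h : IsKdVMode L lam f f₁ f₂) (hL : 0 < L)
    (hne : ∃ x ∈ Icc 0 L, f x ≠ 0) {c : ℝ} (hc : 1 / 3 ≤ c)
    (hle : c * ∫ x in 0..L, ‖f x‖ ^ 2 ≤ ∫ x in 0..L, ‖f₁ x‖ ^ 2) :
    lam.re ≤ -((3 * c - 1) / (2 * L)) := by
  have hne_Ioc : ∃ x ∈ Ioc 0 L, f x ≠ 0 := by
    obtain ⟨x, hx, hfx⟩ := hne
    exact ⟨x, ⟨hx.1.lt_of_ne (by rintro rfl; exact hfx h.apply_zero), hx.2⟩, hfx⟩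
  refine le_of_mul_le_mul_right ?_ (integral_id_mul_norm_sq_pos h.continuousOn hne_Ioc)
  calc lam.re * ∫ x in 0..L, x * ‖f x‖ ^ 2
      = 1 / 2 * (∫ x in 0..L, ‖f x‖ ^ 2) - 3 / 2 * ∫ x in 0..L, ‖f₁ x‖ ^ 2 :=
        h.re_mul_integral_id_mul_norm_sq hL.le
    _ ≤ -((3 * c - 1) / (2 * L)) * (L * ∫ x in 0..L, ‖f x‖ ^ 2) := by
        field_simp
        linarith
    _ ≤ -((3 * c - 1) / (2 * L)) * ∫ x in 0..L, x * ‖f x‖ ^ 2 :=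
        mul_le_mul_of_nonpos_left (integral_id_mul_norm_sq_le h.continuousOn hL.le)
          (neg_nonpos.2 (div_nonneg (by linarith) (by positivity)))

lemma two_thirds_mul_integral_norm_sq_le (h : IsKdVMode (2 * π) lam f f₁ f₂) (hlam : lam ≠ 0) :
    2 / 3 * ∫ x in 0..2 * π, ‖f x‖ ^ 2 ≤ ∫ x in 0..2 * π, ‖f₁ x‖ ^ 2 := by
  have orthogonal : ∫ x in 0..2 * π, (1 - cos x) • f x = 0 :=
    (mul_eq_zero.1 (h.mul_integral_one_sub_cos_smul two_pi_pos.le cos_two_pi)).resolve_left hlam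
  have hf₁_memLp : MemLp f₁ 2 (volume.restrict (Ioc 0 (2 * π))) :=
    memLp_restrict_of_continuousOn_isCompact isCompact_Icc measurableSet_Icc
      Ioc_subset_Icc_self h.continuousOn₁ 2
  have wirtinger := wirtinger_inequality_of_integral_one_sub_cos_smul_eq_zero two_pi_pos
    h.continuousOn h.hasDerivAt hf₁_memLp (h.apply_zero.trans h.apply_length.symm)
    (by simpa only [sub_zero, mul_div_cancel_left₀ _ two_pi_pos.ne'] using orthogonal)
  rw [sub_zero, div_self two_pi_pos.ne', one_pow, one_mul] at wirtinger
  linarith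

end IsKdVMode

lemma hasDerivAt_iteratedDerivWithin {𝕜 F : Type*} [NontriviallyNormedField 𝕜]
    [NormedAddCommGroup F] [NormedSpace 𝕜 F] {n : WithTop ℕ∞} {m : ℕ} {f : 𝕜 → F} {s : Set 𝕜}
    {x : 𝕜} (hf : ContDiffOn 𝕜 n f s) (hmn : m < n) (hs : UniqueDiffOn 𝕜 s) (hx : s ∈ nhds x) :
    HasDerivAt (iteratedDerivWithin m f s) (iteratedDerivWithin (m + 1) f s x) x := by
  rw [iteratedDerivWithin_succ]
  exact (hf.differentiableOn_iteratedDerivWithin hmn hs x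
    (mem_of_mem_nhds hx)).hasDerivWithinAt.hasDerivAt hx

namespace IsKdVEigenpair

lemma isKdVMode {lam : ℂ} {φ : ℝ → ℂ} (h : IsKdVEigenpair lam φ) :
    IsKdVMode (2 * π) lam φ (derivWithin φ (Icc 0 (2 * π)))
      (iteratedDerivWithin 2 φ (Icc 0 (2 * π))) := by
  obtain ⟨hφ, -, eqn, apply_zero, apply_length, deriv_length⟩ := h
  have unique_diff := uniqueDiffOn_Icc two_pi_pos
  have hderiv {m : ℕ} (hm : (m : WithTop ℕ∞) < 3) {x : ℝ} (hx : x ∈ Ioo 0 (2 * π)) :=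
    hasDerivAt_iteratedDerivWithin hφ hm unique_diff (Icc_mem_nhds hx.1 hx.2)
  constructor
  case continuousOn => exact hφ.continuousOn
  case continuousOn₁ => exact hφ.continuousOn_derivWithin unique_diff (by norm_num)
  case continuousOn₂ => exact hφ.continuousOn_iteratedDerivWithin (by norm_num) unique_diff
  case hasDerivAt =>
    intro x hx
    simpa only [iteratedDerivWithin_zero, zero_add, iteratedDerivWithin_one]
      using hderiv (m := 0) (by norm_num) hx
  case hasDerivAt₁ =>
    intro x hx
    simpa only [iteratedDerivWithin_one] using hderiv (m := 1) (by norm_num) hx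
  case hasDerivAt₂ =>
    intro x hx
    refine (hderiv (m := 2) (by norm_num) hx).congr_deriv ?_
    linear_combination eqn x hx
  all_goals assumption

lemma one_sub_cos : IsKdVEigenpair 0 (fun x : ℝ ↦ 1 - Complex.cos x) := by
  have unique_diff := uniqueDiffOn_Icc two_pi_pos
  have smooth : ContDiff ℝ 3 (fun x : ℝ ↦ 1 - Complex.cos x) :=
    contDiff_const.sub ((Complex.contDiff_cos.restrict_scalars ℝ).comp Complex.ofRealCLM.contDiff)
  have deriv₁ : deriv (fun x : ℝ ↦ 1 - Complex.cos x) = fun x : ℝ ↦ Complex.sin x :=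
    funext fun x : ℝ ↦ by
      simpa only [neg_neg] using ((Complex.hasDerivAt_cos x).comp_ofReal.const_sub 1).deriv
  have deriv₂ : deriv (fun x : ℝ ↦ Complex.sin x) = fun x : ℝ ↦ Complex.cos x :=
    funext fun x : ℝ ↦ (Complex.hasDerivAt_sin x).comp_ofReal.deriv
  have deriv₃ : deriv (fun x : ℝ ↦ Complex.cos x) = fun x : ℝ ↦ -Complex.sin x :=
    funext fun x : ℝ ↦ (Complex.hasDerivAt_cos x).comp_ofReal.deriv
  have derivWithin_eq : ∀ x ∈ Icc 0 (2 * π),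
      derivWithin (fun x : ℝ ↦ 1 - Complex.cos x) (Icc 0 (2 * π)) x = Complex.sin x := by
    intro x hx
    rw [(smooth.differentiable (by norm_num) x).derivWithin (unique_diff x hx), deriv₁]
  refine ⟨smooth.contDiffOn, ⟨π, ⟨pi_pos.le, by linarith [pi_pos]⟩, by simp⟩, fun x hx ↦ ?_,
    by simp, by simp, ?_⟩
  · have hx' := Ioo_subset_Icc_self hx
    rw [derivWithin_eq x hx',
      iteratedDerivWithin_eq_iteratedDeriv unique_diff smooth.contDiffAt hx']
    simp only [iteratedDeriv_succ', iteratedDeriv_zero, deriv₁, deriv₂, deriv₃]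
    ring
  · rw [derivWithin_eq _ (right_mem_Icc.2 two_pi_pos.le)]
    simp

lemma re_le {lam : ℂ} {φ : ℝ → ℂ} (h : IsKdVEigenpair lam φ) (hlam : lam ≠ 0) :
    lam.re ≤ -(1 / (4 * π)) := by
  have mode := h.isKdVMode
  have poincare := mode.two_thirds_mul_integral_norm_sq_le hlam
  convert mode.re_le_of_mul_integral_le two_pi_pos h.2.1 (by norm_num) poincare using 2
  ring

end IsKdVEigenpair

/-- at the critical length `L = 2π`, `0` is an eigenvalue of the linear
KdV operator `A`, and there exists `δ > 0` such that every eigenvalue `λ ≠ 0` of `A`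
satisfies `Re λ ≤ −δ`: the nonzero eigenvalues have real parts bounded away from 0. -/
theorem kdv_spectral_gap :
    (∃ φ : ℝ → ℂ, IsKdVEigenpair 0 φ) ∧
    ∃ δ > 0, ∀ lam : ℂ, lam ≠ 0 →
      (∃ φ : ℝ → ℂ, IsKdVEigenpair lam φ) → lam.re ≤ -δ := by
  refine ⟨⟨_, IsKdVEigenpair.one_sub_cos⟩, 1 / (4 * π), by positivity, ?_⟩
  rintro lam hlam ⟨φ, hφ⟩
  exact hφ.re_le hlam
end

section
/- Let L > 0. There exists a constant C > 0 such that for every ε > 0, every T > 0, every y₀, and every classical solution y of the modified KdV system (with cutoff Φ_ε) on [0,T] with y(0,·) = y₀, one has ‖y‖²_{L²(0,T;H₀¹(0,L))} ≤ ((8T + 2L)/3) ‖y₀‖²_{L²(0,L)} + C T ‖y₀‖⁴_{L²(0,L)}. -/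
open Set Real MeasureTheory

/-- The `L²(0,L)` norm of a function on `(0,L)`. -/
noncomputable def L2norm (L : ℝ) (f : ℝ → ℝ) : ℝ :=
  Real.sqrt (∫ x in (0:ℝ)..L, (f x) ^ 2)

/-- A smooth cutoff `Φ ∈ C^∞([0,∞);[0,1])` with `Φ ≡ 1` on `[0,1/2]`, `Φ ≡ 0` on
`[1,∞)` and `Φ′ ≤ 0`.  (The rescaled cutoff is `Φ_ε(r) = Φ(r/ε)`.) -/
def IsCutoff (Φ : ℝ → ℝ) : Prop :=
  ContDiff ℝ (⊤ : ℕ∞) Φ ∧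
  (∀ r ∈ Ici (0:ℝ), Φ r ∈ Icc (0:ℝ) 1) ∧
  (∀ r ∈ Icc (0:ℝ) (1/2 : ℝ), Φ r = 1) ∧
  (∀ r ∈ Ici (1:ℝ), Φ r = 0) ∧
  (∀ r ∈ Ici (0:ℝ), deriv Φ r ≤ 0)

/-- A classical solution of the modified KdV system (with cutoff `Φ_ε = Φ(·/ε)`)
`y_t + y_x + y_xxx + Φ_ε(‖y(t,·)‖_{L²(0,L)}) y y_x = 0`,
`y(t,0) = y(t,L) = y_x(t,L) = 0`, on `[0,T] × [0,L]`. -/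
def IsModifiedKdVSol (L T ε : ℝ) (Φ : ℝ → ℝ) (y : ℝ → ℝ → ℝ) : Prop :=
  (∀ t ∈ Icc (0:ℝ) T, ContDiffOn ℝ 3 (y t) (Icc (0:ℝ) L)) ∧
  (∀ x ∈ Icc (0:ℝ) L, ContDiffOn ℝ 1 (fun s => y s x) (Icc (0:ℝ) T)) ∧
  ContinuousOn (fun p : ℝ × ℝ => y p.1 p.2) (Icc (0:ℝ) T ×ˢ Icc (0:ℝ) L) ∧
  (∀ t ∈ Ioo (0:ℝ) T, ∀ x ∈ Ioo (0:ℝ) L,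
    derivWithin (fun s => y s x) (Icc (0:ℝ) T) t
      + derivWithin (y t) (Icc (0:ℝ) L) x
      + iteratedDerivWithin 3 (y t) (Icc (0:ℝ) L) x
      + Φ (L2norm L (y t) / ε) * (y t x * derivWithin (y t) (Icc (0:ℝ) L) x) = 0) ∧
  (∀ t ∈ Icc (0:ℝ) T,
    y t 0 = 0 ∧ y t L = 0 ∧ derivWithin (y t) (Icc (0:ℝ) L) L = 0)

/-!
Multiply the equation by `y` and integrate over `(0, L)`: the energy `‖y(t)‖²` does not increase.
Multiply by `x y` instead: `(3/2) ∫ |y_x|²` is the loss of `(1/2) ∫ x y²`, up to `(1/2) ∫ y²` and a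
cubic term which Cauchy–Schwarz and Young's inequality absorb at the price of a multiple of
`‖y(t)‖⁴`.

Integrating these identities in time needs `y_t ∈ L²`, locally uniformly in time, whereas a solution
is only pointwise `C¹` in time. By the Baire category theorem, every nonempty locally closed set of
times has a point near which `‖y_t‖` is bounded along that set. Boundedness propagates forward in
time: comparing `y` with its time translates through Grönwall's inequality for `∫ (1 + x) (u - v)²`
bounds the difference quotients of `y`, hence `y_t`. So the closed set of times near which `‖y_t‖`
is unbounded is empty.
-/

open Filter Topology

/-! ### Integrals over rectangles and intervals -/

theorem le_of_forall_Ioo_le {α : Type*} [TopologicalSpace α] [Preorder α] [OrderClosedTopology α]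
    {F G : ℝ → ℝ → α} (hF : Continuous (Function.uncurry F)) (hG : Continuous (Function.uncurry G))
    {a b : ℝ} (hab : a < b) (h : ∀ x z, a < x → x < z → z < b → F x z ≤ G x z) :
    F a b ≤ G a b := by
  have shrink : Tendsto (fun η : ℝ => (a + η, b - η)) (𝓝[>] 0) (𝓝 (a, b)) := by
    have : Continuous fun η : ℝ => (a + η, b - η) := by fun_prop
    simpa using (this.tendsto 0).mono_left nhdsWithin_le_nhds
  refine le_of_tendsto_of_tendsto ((hF.tendsto (a, b)).comp shrink)
    ((hG.tendsto (a, b)).comp shrink) ?_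
  filter_upwards [Ioo_mem_nhdsGT (show 0 < (b - a) / 2 by linarith)] with η hη
  exact h _ _ (by linarith [hη.1]) (by linarith [hη.2]) (by linarith [hη.1])

theorem gronwallBound_zero_le {K ε x : ℝ} (hK : 0 < K) (hε : 0 ≤ ε) :
    gronwallBound 0 K ε x ≤ ε * x * exp (K * x) := by
  have hexp : exp (K * x) - 1 ≤ K * x * exp (K * x) := by
    have h := mul_le_mul_of_nonneg_right (add_one_le_exp (-(K * x))) (exp_pos (K * x)).le
    rw [← exp_add, neg_add_cancel, exp_zero] at h
    linarith
  calc gronwallBound 0 K ε x = ε / K * (exp (K * x) - 1) := by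
        simp only [gronwallBound_of_K_ne_0 hK.ne', zero_mul, zero_add]
    _ ≤ ε / K * (K * x * exp (K * x)) := by gcongr
    _ = ε * x * exp (K * x) := by field_simp

theorem le_gronwallBound_of_sub_le_integral {H : ℝ → ℝ} (hH : Continuous H) {a b K ε : ℝ}
    (hab : a < b)
    (h : ∀ x z, a < x → x < z → z < b → H z - H x ≤ ∫ τ in x..z, (K * H τ + ε)) :
    H b ≤ gronwallBound (H a) K ε (b - a) := by
  have hcont : Continuous fun τ => K * H τ + ε := by fun_prop
  have hprim : Continuous fun z => ∫ τ in a..z, (K * H τ + ε) :=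
    intervalIntegral.continuous_primitive (fun _ _ => hcont.intervalIntegrable _ _) a
  have hsplit : ∀ x z, ∫ τ in x..z, (K * H τ + ε) =
      (∫ τ in a..z, (K * H τ + ε)) - ∫ τ in a..x, (K * H τ + ε) := fun x z =>
    (intervalIntegral.integral_interval_sub_left (hcont.intervalIntegrable _ _)
      (hcont.intervalIntegrable _ _)).symm
  have hclosed : ∀ x z, a ≤ x → x < z → z ≤ b → H z - H x ≤ ∫ τ in x..z, (K * H τ + ε) := by
    intro x z hax hxz hzb
    refine le_of_forall_Ioo_le (F := fun x z => H z - H x)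
      (G := fun x z => ∫ τ in x..z, (K * H τ + ε)) ?_ ?_ hxz
      fun x' z' hx hx' hz => h x' z' (hax.trans_lt hx) hx' (hz.trans_le hzb)
    · exact (hH.comp continuous_snd).sub (hH.comp continuous_fst)
    · exact ((hprim.comp continuous_snd).sub (hprim.comp continuous_fst)).congr
        fun p => (hsplit p.1 p.2).symm
  refine le_gronwallBound_of_liminf_deriv_right_le (f' := fun x => K * H x + ε) hH.continuousOn
    (fun x hx r hr => Eventually.frequently ?_) le_rfl (fun _ _ => le_rfl) b ⟨hab.le, le_rfl⟩
  have hslope := (intervalIntegral.integral_hasDerivAt_right (hcont.intervalIntegrable x x)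
    (hcont.stronglyMeasurableAtFilter _ _) hcont.continuousAt).tendsto_slope.mono_left
      (nhdsWithin_mono x fun z (hz : x < z) => hz.ne')
  filter_upwards [hslope.eventually_lt_const hr, Ioo_mem_nhdsGT hx.2] with z hzr hz
  refine lt_of_le_of_lt ?_ hzr
  rw [slope_def_field, intervalIntegral.integral_same, sub_zero, div_eq_inv_mul]
  have := sub_pos.2 hz.1
  gcongr
  exact hclosed x z hx.1 hz.1 hz.2.le

theorem intervalIntegrable_and_integral_le_of_forall_Ioo {f : ℝ → ℝ} {a b C : ℝ} (hab : a < b)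
    (hf0 : ∀ t, 0 ≤ f t)
    (hf : ∀ x z, a < x → x < z → z < b →
      IntervalIntegrable f volume x z ∧ ∫ t in x..z, f t ≤ C) :
    IntervalIntegrable f volume a b ∧ ∫ t in a..b, f t ≤ C := by
  obtain ⟨η, -, hη, hη0⟩ := exists_seq_strictAnti_tendsto' (show 0 < (b - a) / 2 by linarith)
  have hlt : ∀ n, a < a + η n ∧ a + η n < b - η n ∧ b - η n < b := fun n =>
    ⟨by linarith [(hη n).1], by linarith [(hη n).2], by linarith [(hη n).1]⟩
  have hleft : Tendsto (fun n => a + η n) atTop (𝓝 a) := by simpa using hη0.const_add a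
  have hright : Tendsto (fun n => b - η n) atTop (𝓝 b) := by simpa using hη0.const_sub b
  have hsub : ∀ n, IntegrableOn f (Ioc (a + η n) (b - η n)) ∧
      ∫ t in Ioc (a + η n) (b - η n), f t ≤ C := by
    intro n
    have := hf _ _ (hlt n).1 (hlt n).2.1 (hlt n).2.2
    rwa [intervalIntegrable_iff_integrableOn_Ioc_of_le (hlt n).2.1.le,
      intervalIntegral.integral_of_le (hlt n).2.1.le] at this
  have hint : IntegrableOn f (Ioc a b) :=
    integrableOn_Ioc_of_intervalIntegral_norm_bounded (I := C) (fun n => (hsub n).1) hleft hright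
      (Eventually.of_forall fun n => by simpa only [norm_of_nonneg (hf0 _)] using (hsub n).2)
  have hcover := aecover_Ioc_of_Ioc (μ := volume) hleft hright
  have hlim := hcover.integral_tendsto_of_countably_generated hint
  refine ⟨(intervalIntegrable_iff_integrableOn_Ioc_of_le hab.le).2 hint, ?_⟩
  rw [intervalIntegral.integral_of_le hab.le]
  refine le_of_tendsto' hlim fun n => ?_
  rw [Measure.restrict_restrict_of_subset
    (Ioc_subset_Ioc (hlt n).1.le (hlt n).2.2.le)]
  exact (hsub n).2

theorem integral_sub_integral_eq_integral_integral_deriv {a b c d : ℝ} (hab : a ≤ b) (hcd : c ≤ d)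
    {F F' : ℝ → ℝ → ℝ} (hF : ∀ s ∈ Icc a b, ∀ x ∈ Icc c d, HasDerivAt (fun τ => F τ x) (F' s x) s)
    (hF' : ∀ x ∈ Icc c d, ContinuousOn (fun s => F' s x) (Icc a b))
    (hint : IntegrableOn (Function.uncurry F') (Ioc a b ×ˢ Ioc c d))
    (ha : IntervalIntegrable (F a) volume c d) (hb : IntervalIntegrable (F b) volume c d) :
    IntervalIntegrable (fun s => ∫ x in c..d, F' s x) volume a b ∧
      (∫ x in c..d, F b x) - (∫ x in c..d, F a x) = ∫ s in a..b, ∫ x in c..d, F' s x := by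
  have hprod : Integrable (Function.uncurry F')
      ((volume.restrict (Ioc a b)).prod (volume.restrict (Ioc c d))) := by
    rwa [Measure.prod_restrict]
  have hswap : ∫ s in a..b, ∫ x in c..d, F' s x = ∫ x in c..d, ∫ s in a..b, F' s x := by
    simp only [intervalIntegral.integral_of_le hab, intervalIntegral.integral_of_le hcd]
    exact integral_integral_swap hprod
  constructor
  · rw [intervalIntegrable_iff_integrableOn_Ioc_of_le hab]
    simp only [intervalIntegral.integral_of_le hcd]
    exact hprod.integral_prod_left
  · rw [hswap, ← intervalIntegral.integral_sub hb ha]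
    refine intervalIntegral.integral_congr fun x hx => ?_
    rw [uIcc_of_le hcd] at hx
    refine (intervalIntegral.integral_eq_sub_of_hasDerivAt (f := fun s => F s x) (fun s hs => ?_)
      ((hF' x hx).intervalIntegrable_of_Icc hab)).symm
    rw [uIcc_of_le hab] at hs
    exact hF s hs x hx

theorem integral_mul_sq_sub_integral_mul_sq {a b c d : ℝ} (hab : a ≤ b) (hcd : c ≤ d)
    {p : ℝ → ℝ} {Y Y' : ℝ → ℝ → ℝ} (hp : Continuous p) (hY : Continuous (Function.uncurry Y))
    (hd : ∀ s ∈ Icc a b, ∀ x ∈ Icc c d, HasDerivAt (fun τ => Y τ x) (Y' s x) s)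
    (hY' : ∀ x ∈ Icc c d, ContinuousOn (fun s => Y' s x) (Icc a b))
    (hint : IntegrableOn (Function.uncurry Y') (Ioc a b ×ˢ Ioc c d)) :
    IntervalIntegrable (fun s => ∫ x in c..d, p x * (2 * Y s x * Y' s x)) volume a b ∧
      (∫ x in c..d, p x * Y b x ^ 2) - (∫ x in c..d, p x * Y a x ^ 2) =
        ∫ s in a..b, ∫ x in c..d, p x * (2 * Y s x * Y' s x) := by
  have hY_space : ∀ s, Continuous (Y s) := fun s => hY.comp (Continuous.prodMk_right s)
  have hY_time : ∀ x, Continuous fun s => Y s x := fun x => hY.comp (Continuous.prodMk_left x)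
  have coeff_cont : Continuous fun q : ℝ × ℝ => p q.2 * 2 * Y q.1 q.2 :=
    ((hp.comp continuous_snd).mul continuous_const).mul hY
  refine integral_sub_integral_eq_integral_integral_deriv (F := fun s x => p x * Y s x ^ 2)
    (F' := fun s x => p x * (2 * Y s x * Y' s x)) hab hcd (fun s hs x hx => ?_) (fun x hx => ?_)
    ?_ ((hp.mul ((hY_space a).pow 2)).intervalIntegrable _ _)
    ((hp.mul ((hY_space b).pow 2)).intervalIntegrable _ _)
  · simpa using ((hd s hs x hx).pow 2).const_mul (p x)
  · exact (((hY_time x).const_mul 2).continuousOn.mul (hY' x hx)).const_mul (p x)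
  · refine (hint.continuousOn_mul_of_subset coeff_cont.continuousOn
      (isCompact_Icc.prod isCompact_Icc) (measurableSet_Ioc.prod measurableSet_Ioc)
      (prod_mono Ioc_subset_Icc_self Ioc_subset_Icc_self)).congr_fun (fun q _ => ?_)
      (measurableSet_Ioc.prod measurableSet_Ioc)
    simp only [Function.uncurry]
    ring

theorem integral_mul_sq_sub_integral_mul_sq_le {a b c d : ℝ} (hab : a ≤ b) (hcd : c ≤ d)
    {p φ : ℝ → ℝ} {Y Y' : ℝ → ℝ → ℝ} (hp : Continuous p) (hφ : Continuous φ)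
    (hY : Continuous (Function.uncurry Y))
    (hd : ∀ s ∈ Icc a b, ∀ x ∈ Icc c d, HasDerivAt (fun τ => Y τ x) (Y' s x) s)
    (hY' : ∀ x ∈ Icc c d, ContinuousOn (fun s => Y' s x) (Icc a b))
    (hint : IntegrableOn (Function.uncurry Y') (Ioc a b ×ˢ Ioc c d))
    (hle : ∀ s ∈ Icc a b, ∫ x in c..d, p x * (2 * Y s x * Y' s x) ≤ φ s) :
    (∫ x in c..d, p x * Y b x ^ 2) - (∫ x in c..d, p x * Y a x ^ 2) ≤ ∫ s in a..b, φ s := by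
  obtain ⟨hi, heq⟩ := integral_mul_sq_sub_integral_mul_sq hab hcd hp hY hd hY' hint
  rw [heq]
  exact intervalIntegral.integral_mono_on hab hi (hφ.intervalIntegrable _ _) hle

theorem integrableOn_uncurry_of_integral_sq_le {a b c d K : ℝ} (hcd : c ≤ d) {g : ℝ → ℝ → ℝ}
    (hg : Measurable (Function.uncurry g))
    (hsq : ∀ s ∈ Ioc a b, IntervalIntegrable (fun x => g s x ^ 2) volume c d)
    (hK : ∀ s ∈ Ioc a b, ∫ x in c..d, g s x ^ 2 ≤ K) :
    IntegrableOn (Function.uncurry g) (Ioc a b ×ˢ Ioc c d) := by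
  have hg_sq : Measurable fun q : ℝ × ℝ => Function.uncurry g q ^ 2 := hg.pow_const 2
  rw [IntegrableOn, Measure.volume_eq_prod, ← Measure.prod_restrict]
  refine MemLp.integrable one_le_two ((memLp_two_iff_integrable_sq hg.aestronglyMeasurable).2 ?_)
  rw [integrable_prod_iff hg_sq.aestronglyMeasurable]
  refine ⟨ae_restrict_of_forall_mem measurableSet_Ioc fun s hs => ?_,
    Measure.integrableOn_of_bounded (M := K) measure_Ioc_lt_top.ne
      hg_sq.norm.stronglyMeasurable.integral_prod_right'.aestronglyMeasurable
      (ae_restrict_of_forall_mem measurableSet_Ioc fun s hs => ?_)⟩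
  · exact (intervalIntegrable_iff_integrableOn_Ioc_of_le hcd).1 (hsq s hs)
  · rw [Real.norm_of_nonneg (integral_nonneg fun x => norm_nonneg _)]
    simpa only [Function.uncurry, norm_pow, Real.norm_eq_abs, sq_abs,
      intervalIntegral.integral_of_le hcd] using hK s hs

theorem integral_sq_deriv_le_of_frequently_integral_sq_sub_le {c d t C : ℝ} (hcd : c ≤ d)
    (hC : 0 ≤ C) {Y : ℝ → ℝ → ℝ} {Yt : ℝ → ℝ} (hY : ∀ s, Continuous (Y s))
    (hd : ∀ x ∈ Ioc c d, HasDerivAt (fun s => Y s x) (Yt x) t)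
    (hYt : IntervalIntegrable (fun x => Yt x ^ 2) volume c d)
    (hinc : ∃ᶠ δ in 𝓝[≠] (0 : ℝ), ∫ x in c..d, (Y (t + δ) x - Y t x) ^ 2 ≤ δ ^ 2 * C) :
    ∫ x in c..d, Yt x ^ 2 ≤ C := by
  have lintegral_eq : ∀ {f : ℝ → ℝ}, IntervalIntegrable (fun x => f x ^ 2) volume c d →
      ∫⁻ x in Ioc c d, ENNReal.ofReal (f x ^ 2) = ENNReal.ofReal (∫ x in c..d, f x ^ 2) := by
    intro f hf
    rw [intervalIntegral.integral_of_le hcd, ofReal_integral_eq_lintegral_ofReal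
      ((intervalIntegrable_iff_integrableOn_Ioc_of_le hcd).1 hf)
      (Eventually.of_forall fun x => sq_nonneg _)]
  have quotient_cont : ∀ δ, Continuous fun x => δ⁻¹ * (Y (t + δ) x - Y t x) := fun δ =>
    ((hY (t + δ)).sub (hY t)).const_mul _
  have quotient_bound : ∃ᶠ δ in 𝓝[≠] (0 : ℝ),
      ∫⁻ x in Ioc c d, ENNReal.ofReal ((δ⁻¹ * (Y (t + δ) x - Y t x)) ^ 2) ≤ ENNReal.ofReal C := by
    refine (hinc.and_eventually self_mem_nhdsWithin).mono fun δ ⟨hδ, (hδ0 : δ ≠ 0)⟩ => ?_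
    rw [lintegral_eq (((quotient_cont δ).pow 2).intervalIntegrable _ _)]
    refine ENNReal.ofReal_le_ofReal ?_
    simp only [mul_pow, inv_pow, intervalIntegral.integral_const_mul]
    rwa [inv_mul_le_iff₀ (by positivity)]
  have quotient_lim : ∀ x ∈ Ioc c d, Tendsto
      (fun δ => ENNReal.ofReal ((δ⁻¹ * (Y (t + δ) x - Y t x)) ^ 2)) (𝓝[≠] 0)
      (𝓝 (ENNReal.ofReal (Yt x ^ 2))) := fun x hx =>
    (ENNReal.continuous_ofReal.tendsto _).comp
      (by simpa using (hd x hx).tendsto_slope_zero.pow 2)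
  have fatou : ENNReal.ofReal (∫ x in c..d, Yt x ^ 2) ≤ ENNReal.ofReal C := by
    rw [← lintegral_eq hYt, setLIntegral_congr_fun measurableSet_Ioc
      fun x hx => (quotient_lim x hx).liminf_eq.symm]
    exact (lintegral_liminf_le fun δ =>
      (ENNReal.continuous_ofReal.comp ((quotient_cont δ).pow 2)).measurable).trans
      (liminf_le_of_frequently_le' quotient_bound)
  exact (ENNReal.ofReal_le_ofReal_iff hC).1 fatou

theorem intervalIntegrable_and_integral_le_integral_of_le {f g : ℝ → ℝ} {a b : ℝ} (hab : a ≤ b)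
    (hf : AEStronglyMeasurable f (volume.restrict (Ioc a b))) (hg : IntervalIntegrable g volume a b)
    (hf0 : ∀ t ∈ Icc a b, 0 ≤ f t) (hfg : ∀ t ∈ Icc a b, f t ≤ g t) :
    IntervalIntegrable f volume a b ∧ ∫ t in a..b, f t ≤ ∫ t in a..b, g t := by
  have hf_int : IntervalIntegrable f volume a b := by
    rw [← uIoc_of_le hab] at hf
    refine hg.mono_fun' hf ?_
    rw [uIoc_of_le hab]
    refine ae_restrict_of_forall_mem measurableSet_Ioc fun t ht => ?_
    exact (Real.norm_of_nonneg (hf0 t (Ioc_subset_Icc_self ht))).trans_le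
      (hfg t (Ioc_subset_Icc_self ht))
  exact ⟨hf_int, intervalIntegral.integral_mono_on hab hf_int hg hfg⟩

/-! ### Boundedness by Baire category and propagation -/

theorem bddAbove_image_of_isCompact_of_isBoundedUnder {X α : Type*} [TopologicalSpace X]
    [Preorder α] [IsDirectedOrder α] [Nonempty α] {f : X → α} {s : Set X} (hs : IsCompact s)
    (hf : ∀ x ∈ s, IsBoundedUnder (· ≤ ·) (𝓝[s] x) f) : BddAbove (f '' s) := by
  refine hs.induction_on (p := fun u => BddAbove (f '' u)) ?_ (fun _ _ huv => ?_)
    (fun u v hu hv => ?_) fun x hx => ?_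
  · simp only [image_empty, bddAbove_empty]
  · exact BddAbove.mono (image_mono huv)
  · rw [image_union]
    exact hu.union hv
  · obtain ⟨M, hM⟩ := hf x hx
    exact ⟨_, hM, M, forall_mem_image.2 fun z hz => hz⟩

theorem exists_eventually_forall_le_of_lowerSemicontinuous {X ι : Type*} [TopologicalSpace X]
    [BaireSpace X] [Nonempty X] {f : ι → X → ℝ} (hf : ∀ i, LowerSemicontinuous (f i))
    (hbdd : ∀ x, BddAbove (range fun i => f i x)) :
    ∃ x, ∃ M : ℝ, ∀ᶠ z in 𝓝 x, ∀ i, f i z ≤ M := by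
  let level : ℕ → Set X := fun n => {z | ∀ i, f i z ≤ n}
  have level_closed : ∀ n, IsClosed (level n) := fun n => by
    simp only [level, ofPred_forall]
    exact isClosed_iInter fun i => (hf i).isClosed_preimage n
  have level_cover : ⋃ n, level n = univ := by
    refine eq_univ_of_forall fun x => ?_
    obtain ⟨M, hM⟩ := hbdd x
    obtain ⟨n, hn⟩ := exists_nat_ge M
    exact mem_iUnion.2 ⟨n, fun i => (hM (mem_range_self i)).trans hn⟩
  obtain ⟨n, x, hx⟩ := nonempty_interior_of_iUnion_of_closed level_closed level_cover
  exact ⟨x, n, mem_interior_iff_mem_nhds.1 hx⟩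

theorem exists_eventually_nhdsWithin_forall_le_of_continuousOn {X ι : Type*} [TopologicalSpace X]
    [T2Space X] [LocallyCompactSpace X] {S : Set X} (hS : IsLocallyClosed S) (hne : S.Nonempty)
    {f : ι → X → ℝ} (hf : ∀ i, ContinuousOn (f i) S)
    (hbdd : ∀ x ∈ S, BddAbove (range fun i => f i x)) :
    ∃ x ∈ S, ∃ M : ℝ, ∀ᶠ z in 𝓝[S] x, ∀ i, f i z ≤ M := by
  have := hS.locallyCompactSpace
  have := hne.to_subtype
  obtain ⟨x, M, hM⟩ := exists_eventually_forall_le_of_lowerSemicontinuous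
    (f := fun i => S.domRestrict (f i)) (fun i => (hf i).domRestrict.lowerSemicontinuous)
    fun x => hbdd x x.2
  refine ⟨x, x.2, M, ?_⟩
  rw [nhdsWithin_eq_map_subtype_coe x.2]
  exact hM

theorem exists_last_mem_insert {F : Set ℝ} (hF : IsClosed F) {α t : ℝ} (hαt : α ≤ t) :
    ∃ a ∈ Icc α t, a ∈ insert α F ∧ Disjoint (Ioc a t) F := by
  obtain ⟨a, ⟨haI, haF⟩, hmax⟩ :=
    (isCompact_Icc.inter_right (isClosed_singleton.union hF)).exists_isGreatest
      ⟨α, ⟨le_rfl, hαt⟩, mem_insert α F⟩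
  refine ⟨a, haI, haF, disjoint_left.2 fun s hs hsF => ?_⟩
  exact hs.1.not_ge (hmax ⟨⟨haI.1.trans hs.1.le, hs.2⟩, mem_insert_of_mem α hsF⟩)

theorem isBoundedUnder_nhds_of_propagation {β : Type*} [LinearOrder β] {I : Set ℝ} (hI : IsOpen I)
    {N : ℝ → β}
    (hbaire : ∀ S ⊆ I, S.Nonempty → IsLocallyClosed S →
      ∃ t ∈ S, IsBoundedUnder (· ≤ ·) (𝓝[S] t) N)
    (hprop : ∀ m, ∃ C, ∀ a t, a < t → Icc a t ⊆ I →
      (∀ s ∈ Ioc a t, IsBoundedUnder (· ≤ ·) (𝓝 s) N) → N a ≤ m → N t ≤ C) :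
    ∀ t ∈ I, IsBoundedUnder (· ≤ ·) (𝓝 t) N := by
  by_contra! hbad
  let G : Set ℝ := {t | IsBoundedUnder (· ≤ ·) (𝓝 t) N}
  have G_open : IsOpen G := by
    refine isOpen_iff_mem_nhds.2 fun t ⟨M, hM⟩ => ?_
    filter_upwards [eventually_eventually_nhds.2 (eventually_map.1 hM)] with s hs using ⟨M, hs⟩
  obtain ⟨t₀, ⟨ht₀I, ht₀G⟩, M, hM⟩ := hbaire (I ∩ Gᶜ) inter_subset_left hbad
    (hI.isLocallyClosed.inter G_open.isClosed_compl.isLocallyClosed)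
  obtain ⟨δ, hδ, hball⟩ := Metric.mem_nhds_iff.1
    (inter_mem (hI.mem_nhds ht₀I) (eventually_nhdsWithin_iff.1 (eventually_map.1 hM)))
  have near : ∀ s, t₀ - δ / 2 ≤ s → s ≤ t₀ + δ / 2 → s ∈ I ∧ (s ∉ G → N s ≤ M) := by
    intro s hs hs'
    have := @hball s (by rw [Real.ball_eq_Ioo]; constructor <;> linarith)
    exact ⟨this.1, fun hsG => this.2 ⟨this.1, hsG⟩⟩
  obtain ⟨C, hC⟩ := hprop (max M (N (t₀ - δ / 2)))
  refine ht₀G ⟨max M C, eventually_map.2 ?_⟩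
  filter_upwards [Ioo_mem_nhds (show t₀ - δ / 2 < t₀ by linarith)
    (show t₀ < t₀ + δ / 2 by linarith)] with t ht
  by_cases htG : t ∈ G
  · obtain ⟨a, ha, haG, hdisj⟩ := exists_last_mem_insert G_open.isClosed_compl ht.1.le
    have hat : a < t := ha.2.lt_of_ne (by
      rintro rfl
      exact haG.elim ht.1.ne' (absurd htG))
    refine le_max_of_le_right (hC a t hat ?_ ?_ ?_)
    · exact fun s hs => (near s (ha.1.trans hs.1) (hs.2.trans ht.2.le)).1
    · exact fun s hs => disjoint_compl_right_iff_subset.1 hdisj hs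
    · rcases haG with rfl | haG
      · exact le_max_right _ _
      · exact le_max_of_le_left ((near a ha.1 (ha.2.trans ht.2.le)).2 haG)
  · exact le_max_of_le_left ((near t ht.1.le ht.2.le).2 htG)

/-! ### Square integrals -/

theorem L2norm_nonneg (L : ℝ) (f : ℝ → ℝ) : 0 ≤ L2norm L f := Real.sqrt_nonneg _

theorem integral_sq_nonneg {a b : ℝ} (hab : a ≤ b) (f : ℝ → ℝ) : 0 ≤ ∫ x in a..b, f x ^ 2 :=
  intervalIntegral.integral_nonneg hab fun _ _ => sq_nonneg _

theorem L2norm_sq {L : ℝ} (hL : 0 ≤ L) (f : ℝ → ℝ) :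
    L2norm L f ^ 2 = ∫ x in (0 : ℝ)..L, f x ^ 2 :=
  Real.sq_sqrt (integral_sq_nonneg hL f)

theorem L2norm_congr {L : ℝ} (hL : 0 ≤ L) {f g : ℝ → ℝ} (h : EqOn f g (Icc 0 L)) :
    L2norm L f = L2norm L g := by
  unfold L2norm
  congr 1
  refine intervalIntegral.integral_congr fun x hx => ?_
  rw [uIcc_of_le hL] at hx
  simp only [h hx]

theorem L2norm_eq_lpNorm {L : ℝ} (hL : 0 ≤ L) {f : ℝ → ℝ}
    (hf : AEStronglyMeasurable f (volume.restrict (Ioc 0 L))) :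
    L2norm L f = lpNorm f 2 (volume.restrict (Ioc 0 L)) := by
  rw [lpNorm_eq_integral_norm_rpow_toReal two_ne_zero ENNReal.ofNat_ne_top hf, L2norm,
    intervalIntegral.integral_of_le hL, Real.sqrt_eq_rpow]
  simp

theorem abs_L2norm_sub_le {L : ℝ} (hL : 0 ≤ L) {f g : ℝ → ℝ} (hf : Continuous f)
    (hg : Continuous g) : |L2norm L f - L2norm L g| ≤ L2norm L (f - g) := by
  have memLp : ∀ {h : ℝ → ℝ}, Continuous h → MemLp h 2 (volume.restrict (Ioc 0 L)) := by
    intro h hh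
    obtain ⟨B, hB⟩ := isCompact_Icc.exists_bound_of_continuousOn (hh.continuousOn (s := Icc 0 L))
    exact .of_bound hh.aestronglyMeasurable B
      (ae_restrict_of_forall_mem measurableSet_Ioc fun x hx => hB x (Ioc_subset_Icc_self hx))
  simp only [L2norm_eq_lpNorm hL (memLp hf).1, L2norm_eq_lpNorm hL (memLp hg).1,
    L2norm_eq_lpNorm hL (memLp (hf.sub hg)).1]
  rw [abs_sub_le_iff]
  constructor
  · linarith [lpNorm_le_lpNorm_add_lpNorm_sub' (f := f) (p := 2) (memLp hg) (by norm_num)]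
  · linarith [lpNorm_le_lpNorm_add_lpNorm_sub (f := g) (p := 2) (memLp hf) (by norm_num)]

theorem sq_integral_le_mul_integral_sq {f : ℝ → ℝ} {a b : ℝ} (hab : a ≤ b)
    (hf : IntervalIntegrable f volume a b)
    (hf2 : IntervalIntegrable (fun x => f x ^ 2) volume a b) :
    (∫ x in a..b, f x) ^ 2 ≤ (b - a) * ∫ x in a..b, f x ^ 2 := by
  rcases hab.eq_or_lt with rfl | hlt
  · simp only [intervalIntegral.integral_same, sub_self, zero_mul, zero_pow two_ne_zero, le_refl]
  set I := ∫ x in a..b, f x with hI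
  have hvar : ∫ x in a..b, ((b - a) * f x - I) ^ 2 =
      (b - a) * ((b - a) * (∫ x in a..b, f x ^ 2) - I ^ 2) := by
    have expand : ∀ x, ((b - a) * f x - I) ^ 2 =
        (b - a) ^ 2 * f x ^ 2 - 2 * (b - a) * I * f x + I ^ 2 := fun x => by ring
    simp only [expand]
    rw [intervalIntegral.integral_add ((hf2.const_mul _).sub (hf.const_mul _)) (by simp),
      intervalIntegral.integral_sub (hf2.const_mul _) (hf.const_mul _),
      intervalIntegral.integral_const_mul, intervalIntegral.integral_const_mul,
      intervalIntegral.integral_const, smul_eq_mul, ← hI]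
    ring
  have := nonneg_of_mul_nonneg_right (hvar ▸ integral_sq_nonneg hab _) (sub_pos.2 hlt)
  linarith

/-! ### Multiplier identities for a fixed time -/

theorem integral_affine_mul_deriv {f f' : ℝ → ℝ} {a b : ℝ} (hab : a ≤ b)
    (hf : ContinuousOn f (Icc a b)) (hf' : ContinuousOn f' (Icc a b))
    (hd : ∀ x ∈ Ioo a b, HasDerivAt f (f' x) x) (α β : ℝ) :
    ∫ x in a..b, (α + β * x) * f' x =
      (α + β * b) * f b - (α + β * a) * f a - β * ∫ x in a..b, f x := by
  have hweight : Continuous fun x : ℝ => α + β * x := by fun_prop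
  rw [← intervalIntegral.integral_const_mul]
  refine intervalIntegral.integral_mul_deriv_eq_deriv_mul_of_hasDerivAt (u := fun x => α + β * x)
    (u' := fun _ => β) hweight.continuousOn (by rwa [uIcc_of_le hab]) (fun x _ => ?_)
    (fun x hx => hd x (by simpa only [hab, min_eq_left, max_eq_right] using hx)) (by simp)
    (hf'.intervalIntegrable_of_Icc hab)
  simpa using ((hasDerivAt_id x).const_mul β).const_add α

theorem add_mul_mul_le (z p z' w : ℝ) :
    (z + p * z') * w ≤ z ^ 2 + 3 * z' ^ 2 + (1 + p ^ 2) * (w ^ 2 / 2) := by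
  have young₀ : z * w ≤ z ^ 2 + w ^ 2 / 4 := by linarith [sq_nonneg (z - w / 2)]
  have young₁ : z' * (p * w) ≤ 3 * z' ^ 2 + (p * w) ^ 2 / 12 := by
    linarith [sq_nonneg (z' - p * w / 6)]
  linarith [sq_nonneg w, sq_nonneg (p * w)]

theorem sq_mul_sq_sub_mul_sq_le {a b c d M R D : ℝ} (ha : |a| ≤ R) (hb : |b| ≤ R) (hc : |c| ≤ M)
    (hcd : (c - d) ^ 2 ≤ D) :
    (c * a ^ 2 - d * b ^ 2) ^ 2 ≤ 8 * M ^ 2 * R ^ 2 * (a - b) ^ 2 + 2 * D * R ^ 4 := by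
  have hD : 0 ≤ D := (sq_nonneg _).trans hcd
  have hsum : |a + b| ≤ 2 * R := (abs_add_le a b).trans (by linarith)
  calc (c * a ^ 2 - d * b ^ 2) ^ 2 = (c * (a + b) * (a - b) + (c - d) * b ^ 2) ^ 2 := by ring
    _ ≤ 2 * ((c * (a + b) * (a - b)) ^ 2 + ((c - d) * b ^ 2) ^ 2) := add_sq_le
    _ = 2 * (|c| ^ 2 * |a + b| ^ 2 * (a - b) ^ 2 + (c - d) ^ 2 * |b| ^ 4) := by
        simp only [mul_pow, sq_abs, (by decide : Even 4).pow_abs]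
        ring
    _ ≤ 2 * (M ^ 2 * (2 * R) ^ 2 * (a - b) ^ 2 + D * R ^ 4) := by gcongr
    _ = _ := by ring

theorem add_mul_mul_sq_sub_mul_sq_le {L x z' a b c d M R D : ℝ} (hx : x ∈ Icc 0 L)
    (ha : |a| ≤ R) (hb : |b| ≤ R) (hc : |c| ≤ M) (hcd : (c - d) ^ 2 ≤ D) :
    (a - b + (1 + x) * z') * (c * a ^ 2 - d * b ^ 2) ≤
      (1 + (1 + (1 + L) ^ 2) * (4 * M ^ 2 * R ^ 2)) * (a - b) ^ 2 + 3 * z' ^ 2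
        + (1 + (1 + L) ^ 2) * (D * R ^ 4) := by
  calc (a - b + (1 + x) * z') * (c * a ^ 2 - d * b ^ 2) ≤
        (a - b) ^ 2 + 3 * z' ^ 2 + (1 + (1 + x) ^ 2) * ((c * a ^ 2 - d * b ^ 2) ^ 2 / 2) :=
        add_mul_mul_le _ _ _ _
    _ ≤ (a - b) ^ 2 + 3 * z' ^ 2 + (1 + (1 + L) ^ 2) *
          ((8 * M ^ 2 * R ^ 2 * (a - b) ^ 2 + 2 * D * R ^ 4) / 2) := by
        have := hx.1
        gcongr
        · exact hx.2
        · exact sq_mul_sq_sub_mul_sq_le ha hb hc hcd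
    _ = _ := by ring

/-- A state `u` of the system on `[0, L]`, with its successive space derivatives `u₁`, `u₂`, `u₃`:
a `C³` function with `u(0) = u(L) = u'(L) = 0`. -/
structure KdVProfile (L : ℝ) (u u₁ u₂ u₃ : ℝ → ℝ) : Prop where
  continuousOn : ContinuousOn u (Icc 0 L)
  continuousOn₁ : ContinuousOn u₁ (Icc 0 L)
  continuousOn₂ : ContinuousOn u₂ (Icc 0 L)
  continuousOn₃ : ContinuousOn u₃ (Icc 0 L)
  hasDerivAt : ∀ x ∈ Ioo 0 L, HasDerivAt u (u₁ x) x
  hasDerivAt₁ : ∀ x ∈ Ioo 0 L, HasDerivAt u₁ (u₂ x) x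
  hasDerivAt₂ : ∀ x ∈ Ioo 0 L, HasDerivAt u₂ (u₃ x) x
  left_eq_zero : u 0 = 0
  right_eq_zero : u L = 0
  deriv_right_eq_zero : u₁ L = 0

/-- The right-hand side `-u' - u''' - c u u'` of the evolution equation, where `u₁`, `u₃` stand for
`u'`, `u'''` and `c` is the value of the cutoff. -/
def kdvRHS (c : ℝ) (u u₁ u₃ : ℝ → ℝ) (x : ℝ) : ℝ :=
  -u₁ x - u₃ x - c * (u x * u₁ x)

/-- The squared distance `∫ (1 + x) |u - v|²` on `(0, L)`; the weight `1 + x` makes the dispersive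
term control `∫ |u' - v'|²`. -/
noncomputable def weightedSqDist (L : ℝ) (u v : ℝ → ℝ) : ℝ :=
  ∫ x in (0 : ℝ)..L, (1 + x) * (u x - v x) ^ 2

theorem integral_sq_sub_le_weightedSqDist {L : ℝ} (hL : 0 ≤ L) {u v : ℝ → ℝ}
    (hu : ContinuousOn u (Icc 0 L)) (hv : ContinuousOn v (Icc 0 L)) :
    ∫ x in (0 : ℝ)..L, (u x - v x) ^ 2 ≤ weightedSqDist L u v :=
  intervalIntegral.integral_mono_on hL
    (ContinuousOn.intervalIntegrable_of_Icc hL (by fun_prop))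
    (ContinuousOn.intervalIntegrable_of_Icc hL (by fun_prop)) fun x hx =>
      le_mul_of_one_le_left (sq_nonneg _) (le_add_of_nonneg_right hx.1)

/-- An exponential rate at which `weightedSqDist` between two solutions bounded by `R` may grow,
when the coefficient of the nonlinearity is bounded by `M` and `κ`-Lipschitz in the `L²` norm. -/
noncomputable def kdvGrowthRate (L M κ R : ℝ) : ℝ :=
  2 + (1 + (1 + L) ^ 2) * (4 * M ^ 2 * R ^ 2 + L * κ ^ 2 * R ^ 4)

theorem kdvGrowthRate_pos {L : ℝ} (hL : 0 ≤ L) (M κ R : ℝ) : 0 < kdvGrowthRate L M κ R := by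
  unfold kdvGrowthRate
  positivity

namespace KdVProfile

variable {L : ℝ} {u u₁ u₂ u₃ v v₁ v₂ v₃ : ℝ → ℝ}

theorem of_contDiffOn (hL : 0 < L) {f : ℝ → ℝ} (hf : ContDiffOn ℝ 3 f (Icc 0 L)) (h0 : f 0 = 0)
    (h1 : f L = 0) (h2 : derivWithin f (Icc 0 L) L = 0) :
    KdVProfile L f (derivWithin f (Icc 0 L)) (iteratedDerivWithin 2 f (Icc 0 L))
      (iteratedDerivWithin 3 f (Icc 0 L)) := by
  have unique : UniqueDiffOn ℝ (Icc 0 L) := uniqueDiffOn_Icc hL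
  have hasDerivAt_iterated : ∀ m : ℕ, ((m : ℕ∞) : WithTop ℕ∞) < 3 → ∀ x ∈ Ioo 0 L,
      HasDerivAt (iteratedDerivWithin m f (Icc 0 L))
        (iteratedDerivWithin (m + 1) f (Icc 0 L) x) x := by
    intro m hm x hx
    have hd := hf.differentiableOn_iteratedDerivWithin hm unique x (Ioo_subset_Icc_self hx)
    rw [iteratedDerivWithin_succ]
    exact hd.hasDerivWithinAt.hasDerivAt (Icc_mem_nhds hx.1 hx.2)
  rw [← iteratedDerivWithin_one] at h2 ⊢
  refine ⟨hf.continuousOn, hf.continuousOn_iteratedDerivWithin (by norm_num) unique,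
    hf.continuousOn_iteratedDerivWithin (by norm_num) unique,
    hf.continuousOn_iteratedDerivWithin (by norm_num) unique, ?_,
    hasDerivAt_iterated 1 (by norm_num), hasDerivAt_iterated 2 (by norm_num), h0, h1, h2⟩
  simpa only [iteratedDerivWithin_zero] using hasDerivAt_iterated 0 (by norm_num)

theorem congr (hu : KdVProfile L u u₁ u₂ u₃) (hL : 0 ≤ L) (h : EqOn v u (Icc 0 L)) :
    KdVProfile L v u₁ u₂ u₃ where
  continuousOn := hu.continuousOn.congr h
  continuousOn₁ := hu.continuousOn₁
  continuousOn₂ := hu.continuousOn₂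
  continuousOn₃ := hu.continuousOn₃
  hasDerivAt x hx := (hu.hasDerivAt x hx).congr_of_eventuallyEq
    (h.eventuallyEq_of_mem (Icc_mem_nhds hx.1 hx.2))
  hasDerivAt₁ := hu.hasDerivAt₁
  hasDerivAt₂ := hu.hasDerivAt₂
  left_eq_zero := (h (left_mem_Icc.2 hL)).trans hu.left_eq_zero
  right_eq_zero := (h (right_mem_Icc.2 hL)).trans hu.right_eq_zero
  deriv_right_eq_zero := hu.deriv_right_eq_zero

theorem sub (hu : KdVProfile L u u₁ u₂ u₃) (hv : KdVProfile L v v₁ v₂ v₃) :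
    KdVProfile L (u - v) (u₁ - v₁) (u₂ - v₂) (u₃ - v₃) where
  continuousOn := hu.continuousOn.sub hv.continuousOn
  continuousOn₁ := hu.continuousOn₁.sub hv.continuousOn₁
  continuousOn₂ := hu.continuousOn₂.sub hv.continuousOn₂
  continuousOn₃ := hu.continuousOn₃.sub hv.continuousOn₃
  hasDerivAt x hx := (hu.hasDerivAt x hx).sub (hv.hasDerivAt x hx)
  hasDerivAt₁ x hx := (hu.hasDerivAt₁ x hx).sub (hv.hasDerivAt₁ x hx)
  hasDerivAt₂ x hx := (hu.hasDerivAt₂ x hx).sub (hv.hasDerivAt₂ x hx)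
  left_eq_zero := by simp [hu.left_eq_zero, hv.left_eq_zero]
  right_eq_zero := by simp [hu.right_eq_zero, hv.right_eq_zero]
  deriv_right_eq_zero := by simp [hu.deriv_right_eq_zero, hv.deriv_right_eq_zero]

theorem continuousOn_kdvRHS (hu : KdVProfile L u u₁ u₂ u₃) (c : ℝ) :
    ContinuousOn (kdvRHS c u u₁ u₃) (Icc 0 L) :=
  (hu.continuousOn₁.neg.sub hu.continuousOn₃).sub
    ((hu.continuousOn.mul hu.continuousOn₁).const_smul c)

theorem integral_mul_deriv_deriv (hu : KdVProfile L u u₁ u₂ u₃) (hL : 0 ≤ L) :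
    ∫ x in (0 : ℝ)..L, u x * u₂ x = -∫ x in (0 : ℝ)..L, u₁ x ^ 2 := by
  have hIoo : ∀ x ∈ Ioo (min 0 L) (max 0 L), x ∈ Ioo 0 L := fun x hx => by
    rwa [min_eq_left hL, max_eq_right hL] at hx
  rw [intervalIntegral.integral_mul_deriv_eq_deriv_mul_of_hasDerivAt
    (by simpa only [uIcc_of_le hL] using hu.continuousOn)
    (by simpa only [uIcc_of_le hL] using hu.continuousOn₁)
    (fun x hx => hu.hasDerivAt x (hIoo x hx)) (fun x hx => hu.hasDerivAt₁ x (hIoo x hx))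
    (hu.continuousOn₁.intervalIntegrable_of_Icc hL)
    (hu.continuousOn₂.intervalIntegrable_of_Icc hL)]
  simp only [hu.left_eq_zero, hu.right_eq_zero, zero_mul, sub_self, zero_sub, sq]

theorem integral_affine_mul_dispersion (hu : KdVProfile L u u₁ u₂ u₃) (hL : 0 ≤ L) (α β : ℝ) :
    ∫ x in (0 : ℝ)..L, (α + β * x) * (2 * u x * (u₁ x + u₃ x)) =
      α * u₁ 0 ^ 2 +
        β * (3 * (∫ x in (0 : ℝ)..L, u₁ x ^ 2) - ∫ x in (0 : ℝ)..L, u x ^ 2) := by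
  obtain ⟨c0, c1, c2, c3, d0, d1, d2, b0, bL, b1⟩ := id hu
  have flux_deriv : ∀ x ∈ Ioo 0 L, HasDerivAt (fun x => u x ^ 2 + 2 * (u x * u₂ x) - u₁ x ^ 2)
      (2 * u x * (u₁ x + u₃ x)) x := fun x hx =>
    ((((d0 x hx).pow 2).add (((d0 x hx).mul (d2 x hx)).const_mul 2)).sub
      ((d1 x hx).pow 2)).congr_deriv (by push_cast; ring)
  rw [integral_affine_mul_deriv hL (by fun_prop) (by fun_prop) flux_deriv,
    intervalIntegral.integral_sub, intervalIntegral.integral_add,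
    intervalIntegral.integral_const_mul, hu.integral_mul_deriv_deriv hL, b0, bL, b1]
  · ring
  all_goals exact ContinuousOn.intervalIntegrable_of_Icc hL (by fun_prop)

theorem integral_affine_mul_cubic (hu : KdVProfile L u u₁ u₂ u₃) (hL : 0 ≤ L) (α β : ℝ) :
    ∫ x in (0 : ℝ)..L, (α + β * x) * (2 * u x * (u x * u₁ x)) =
      -(2 / 3 * β) * ∫ x in (0 : ℝ)..L, u x ^ 3 := by
  obtain ⟨c0, c1, -, -, d0, -, -, b0, bL, -⟩ := hu
  have cube_deriv : ∀ x ∈ Ioo 0 L, HasDerivAt (fun x => 2 / 3 * u x ^ 3)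
      (2 * u x * (u x * u₁ x)) x := fun x hx =>
    (((d0 x hx).pow 3).const_mul (2 / 3)).congr_deriv (by push_cast; ring)
  rw [integral_affine_mul_deriv hL (by fun_prop) (by fun_prop) cube_deriv,
    intervalIntegral.integral_const_mul, b0, bL]
  ring

theorem integral_affine_mul_kdvRHS (hu : KdVProfile L u u₁ u₂ u₃) (hL : 0 ≤ L) (c α β : ℝ) :
    ∫ x in (0 : ℝ)..L, (α + β * x) * (2 * u x * kdvRHS c u u₁ u₃ x) =
      -(α * u₁ 0 ^ 2)
        - β * (3 * (∫ x in (0 : ℝ)..L, u₁ x ^ 2) - ∫ x in (0 : ℝ)..L, u x ^ 2)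
        + 2 / 3 * c * β * ∫ x in (0 : ℝ)..L, u x ^ 3 := by
  obtain ⟨c0, c1, -, c3, -⟩ := id hu
  have split : ∀ x, (α + β * x) * (2 * u x * kdvRHS c u u₁ u₃ x) =
      -((α + β * x) * (2 * u x * (u₁ x + u₃ x)))
        - c * ((α + β * x) * (2 * u x * (u x * u₁ x))) := fun x => by
    unfold kdvRHS
    ring
  simp only [split]
  rw [intervalIntegral.integral_sub, intervalIntegral.integral_neg,
    intervalIntegral.integral_const_mul, hu.integral_affine_mul_dispersion hL,
    hu.integral_affine_mul_cubic hL]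
  · ring
  all_goals exact ContinuousOn.intervalIntegrable_of_Icc hL (by fun_prop)

theorem integral_mul_kdvRHS_nonpos (hu : KdVProfile L u u₁ u₂ u₃) (hL : 0 ≤ L) (c : ℝ) :
    ∫ x in (0 : ℝ)..L, 2 * u x * kdvRHS c u u₁ u₃ x ≤ 0 := by
  have h := hu.integral_affine_mul_kdvRHS hL c 1 0
  simp only [zero_mul, mul_zero, add_zero, one_mul, sub_zero] at h
  rw [h]
  exact neg_nonpos.2 (sq_nonneg _)

theorem sq_le_mul_integral_deriv_sq (hu : KdVProfile L u u₁ u₂ u₃) {x : ℝ} (hx : x ∈ Icc 0 L) :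
    u x ^ 2 ≤ L * ∫ r in (0 : ℝ)..L, u₁ r ^ 2 := by
  have hsub : Icc 0 x ⊆ Icc 0 L := Icc_subset_Icc_right hx.2
  have hu₁ := (hu.continuousOn₁.mono hsub).intervalIntegrable_of_Icc (μ := volume) hx.1
  have hu₁_sq : ContinuousOn (fun r => u₁ r ^ 2) (Icc 0 L) := hu.continuousOn₁.pow 2
  have ftc : ∫ r in (0 : ℝ)..x, u₁ r = u x := by
    rw [intervalIntegral.integral_eq_sub_of_hasDerivAt_of_le hx.1 (hu.continuousOn.mono hsub)
      (fun r hr => hu.hasDerivAt r ⟨hr.1, hr.2.trans_le hx.2⟩) hu₁, hu.left_eq_zero, sub_zero]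
  calc u x ^ 2 ≤ (x - 0) * ∫ r in (0 : ℝ)..x, u₁ r ^ 2 := by
        rw [← ftc]
        exact sq_integral_le_mul_integral_sq hx.1 hu₁
          ((hu₁_sq.mono hsub).intervalIntegrable_of_Icc hx.1)
    _ ≤ L * ∫ r in (0 : ℝ)..L, u₁ r ^ 2 := by
        rw [sub_zero]
        refine mul_le_mul hx.2 ?_ (integral_sq_nonneg hx.1 _) (hx.1.trans hx.2)
        exact intervalIntegral.integral_mono_interval le_rfl hx.1 hx.2
          (.of_forall fun r => sq_nonneg _) (hu₁_sq.intervalIntegrable_of_Icc (hx.1.trans hx.2))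

theorem abs_integral_cube_le (hu : KdVProfile L u u₁ u₂ u₃) (hL : 0 ≤ L) :
    |∫ x in (0 : ℝ)..L, u x ^ 3| ≤
      √L * √(∫ x in (0 : ℝ)..L, u₁ x ^ 2) * ∫ x in (0 : ℝ)..L, u x ^ 2 := by
  have hc := hu.continuousOn
  rw [← intervalIntegral.integral_const_mul, ← Real.sqrt_mul hL]
  refine (intervalIntegral.abs_integral_le_integral_abs hL).trans
    (intervalIntegral.integral_mono_on hL (ContinuousOn.intervalIntegrable_of_Icc hL (by fun_prop))
      (ContinuousOn.intervalIntegrable_of_Icc hL (by fun_prop)) fun x hx => ?_)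
  rw [pow_succ', abs_mul, abs_of_nonneg (sq_nonneg (u x))]
  gcongr
  exact Real.abs_le_sqrt (hu.sq_le_mul_integral_deriv_sq hx)

theorem integral_id_mul_kdvRHS_le (hu : KdVProfile L u u₁ u₂ u₃) (hL : 0 ≤ L) {c M : ℝ}
    (hc : |c| ≤ M) :
    ∫ x in (0 : ℝ)..L, x * (2 * u x * kdvRHS c u u₁ u₃ x) ≤
      -(3 / 2) * (∫ x in (0 : ℝ)..L, (u x ^ 2 + u₁ x ^ 2)) + 5 / 2 * (∫ x in (0 : ℝ)..L, u x ^ 2)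
        + 2 * L * M ^ 2 / 27 * (∫ x in (0 : ℝ)..L, u x ^ 2) ^ 2 := by
  obtain ⟨c0, c1, -⟩ := id hu
  have virial := hu.integral_affine_mul_kdvRHS hL c 0 1
  have cube_le := hu.abs_integral_cube_le hL
  simp only [zero_mul, one_mul, mul_one, zero_add, neg_zero, zero_sub] at virial
  rw [virial, intervalIntegral.integral_add
    (ContinuousOn.intervalIntegrable_of_Icc hL (by fun_prop))
    (ContinuousOn.intervalIntegrable_of_Icc hL (by fun_prop))]
  set E := ∫ x in (0 : ℝ)..L, u x ^ 2
  set P := ∫ x in (0 : ℝ)..L, u₁ x ^ 2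
  set q := ∫ x in (0 : ℝ)..L, u x ^ 3
  have hP : √P ^ 2 = P := Real.sq_sqrt (integral_sq_nonneg hL _)
  have hsqrtL : √L ^ 2 = L := Real.sq_sqrt hL
  have nonlinear_le : c * q ≤ M * (√L * √P * E) := by
    calc c * q ≤ |c| * |q| := (le_abs_self _).trans_eq (abs_mul c q)
      _ ≤ M * (√L * √P * E) := mul_le_mul hc cube_le (abs_nonneg q) ((abs_nonneg c).trans hc)
  have young : 2 / 3 * (M * (√L * √P * E)) ≤ 3 / 2 * P + 2 * L * M ^ 2 / 27 * E ^ 2 := by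
    rw [← hP, ← hsqrtL, Real.sqrt_sq (Real.sqrt_nonneg P), Real.sqrt_sq (Real.sqrt_nonneg L)]
    linarith [sq_nonneg (√P - 2 / 9 * (M * √L * E))]
  linarith

theorem integral_one_add_mul_sub_mul_nonlinearity_sub (hu : KdVProfile L u u₁ u₂ u₃)
    (hv : KdVProfile L v v₁ v₂ v₃) (hL : 0 ≤ L) (c d : ℝ) :
    ∫ x in (0 : ℝ)..L, (1 + x) * (2 * (u x - v x) * (c * (u x * u₁ x) - d * (v x * v₁ x))) =
      -∫ x in (0 : ℝ)..L,
        (u x - v x + (1 + x) * (u₁ x - v₁ x)) * (c * u x ^ 2 - d * v x ^ 2) := by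
  obtain ⟨uc0, uc1, -, -, ud0, -, -, ub0, ubL, -⟩ := hu
  obtain ⟨vc0, vc1, -, -, vd0, -, -, vb0, vbL, -⟩ := hv
  have product_deriv : ∀ x ∈ Ioo 0 L,
      HasDerivAt (fun x => (u x - v x) * (c * u x ^ 2 - d * v x ^ 2))
        ((u₁ x - v₁ x) * (c * u x ^ 2 - d * v x ^ 2) +
          2 * (u x - v x) * (c * (u x * u₁ x) - d * (v x * v₁ x))) x := fun x hx =>
    (((ud0 x hx).sub (vd0 x hx)).mul ((((ud0 x hx).pow 2).const_mul c).sub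
      (((vd0 x hx).pow 2).const_mul d))).congr_deriv
        (by simp only [Pi.sub_apply, Pi.pow_apply]; push_cast; ring)
  have parts := integral_affine_mul_deriv hL (by fun_prop) (by fun_prop) product_deriv 1 1
  simp only [one_mul, ub0, ubL, vb0, vbL, sub_zero, zero_mul, mul_zero, zero_sub] at parts
  have split : ∀ x, (1 + x) * (2 * (u x - v x) * (c * (u x * u₁ x) - d * (v x * v₁ x))) =
      (1 + x) * ((u₁ x - v₁ x) * (c * u x ^ 2 - d * v x ^ 2) +
          2 * (u x - v x) * (c * (u x * u₁ x) - d * (v x * v₁ x))) +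
        (u x - v x) * (c * u x ^ 2 - d * v x ^ 2) -
      (u x - v x + (1 + x) * (u₁ x - v₁ x)) * (c * u x ^ 2 - d * v x ^ 2) := fun x => by ring
  simp only [split]
  rw [intervalIntegral.integral_sub, intervalIntegral.integral_add, parts, neg_add_cancel, zero_sub]
  all_goals exact ContinuousOn.intervalIntegrable_of_Icc hL (by fun_prop)

theorem integral_one_add_mul_sub_mul_kdvRHS_sub (hu : KdVProfile L u u₁ u₂ u₃)
    (hv : KdVProfile L v v₁ v₂ v₃) (hL : 0 ≤ L) (c d : ℝ) :
    ∫ x in (0 : ℝ)..L,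
        (1 + x) * (2 * (u x - v x) * (kdvRHS c u u₁ u₃ x - kdvRHS d v v₁ v₃ x)) =
      -(u₁ 0 - v₁ 0) ^ 2 + (∫ x in (0 : ℝ)..L, (u x - v x) ^ 2)
        - 3 * (∫ x in (0 : ℝ)..L, (u₁ x - v₁ x) ^ 2)
        + ∫ x in (0 : ℝ)..L,
          (u x - v x + (1 + x) * (u₁ x - v₁ x)) * (c * u x ^ 2 - d * v x ^ 2) := by
  have dispersion := (hu.sub hv).integral_affine_mul_dispersion hL 1 1
  have nonlinear := hu.integral_one_add_mul_sub_mul_nonlinearity_sub hv hL c d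
  obtain ⟨uc0, uc1, -, uc3, -⟩ := hu
  obtain ⟨vc0, vc1, -, vc3, -⟩ := hv
  have split : ∀ x, (1 + x) * (2 * (u x - v x) * (kdvRHS c u u₁ u₃ x - kdvRHS d v v₁ v₃ x)) =
      -((1 + x) * (2 * (u x - v x) * (u₁ x - v₁ x + (u₃ x - v₃ x)))) -
        (1 + x) * (2 * (u x - v x) * (c * (u x * u₁ x) - d * (v x * v₁ x))) := fun x => by
    unfold kdvRHS
    ring
  simp only [Pi.sub_apply, one_mul] at dispersion
  simp only [split]
  rw [intervalIntegral.integral_sub, intervalIntegral.integral_neg, dispersion, nonlinear]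
  · ring
  all_goals exact ContinuousOn.intervalIntegrable_of_Icc hL (by fun_prop)

theorem integral_one_add_mul_sub_mul_kdvRHS_sub_le (hu : KdVProfile L u u₁ u₂ u₃)
    (hv : KdVProfile L v v₁ v₂ v₃) (hL : 0 ≤ L) {c d M κ R : ℝ} (hc : |c| ≤ M)
    (hcd : |c - d| ≤ κ * L2norm L (u - v)) (huR : ∀ x ∈ Icc 0 L, |u x| ≤ R)
    (hvR : ∀ x ∈ Icc 0 L, |v x| ≤ R) :
    ∫ x in (0 : ℝ)..L,
        (1 + x) * (2 * (u x - v x) * (kdvRHS c u u₁ u₃ x - kdvRHS d v v₁ v₃ x)) ≤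
      kdvGrowthRate L M κ R * weightedSqDist L u v := by
  rw [hu.integral_one_add_mul_sub_mul_kdvRHS_sub hv hL]
  obtain ⟨uc0, uc1, -⟩ := hu
  obtain ⟨vc0, vc1, -⟩ := hv
  have integrable : ∀ {f : ℝ → ℝ}, ContinuousOn f (Icc 0 L) → IntervalIntegrable f volume 0 L :=
    fun hf => hf.intervalIntegrable_of_Icc hL
  set Z := ∫ x in (0 : ℝ)..L, (u x - v x) ^ 2 with hZ
  have hcd_sq : (c - d) ^ 2 ≤ κ ^ 2 * Z := by
    calc (c - d) ^ 2 = |c - d| ^ 2 := (sq_abs _).symm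
      _ ≤ (κ * L2norm L (u - v)) ^ 2 := by gcongr
      _ = κ ^ 2 * Z := by rw [mul_pow, L2norm_sq hL]; rfl
  have nonlinear_le : ∫ x in (0 : ℝ)..L,
        (u x - v x + (1 + x) * (u₁ x - v₁ x)) * (c * u x ^ 2 - d * v x ^ 2) ≤
      ∫ x in (0 : ℝ)..L, ((1 + (1 + (1 + L) ^ 2) * (4 * M ^ 2 * R ^ 2)) * (u x - v x) ^ 2
        + 3 * (u₁ x - v₁ x) ^ 2 + (1 + (1 + L) ^ 2) * (κ ^ 2 * Z * R ^ 4)) := by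
    refine intervalIntegral.integral_mono_on hL (integrable (by fun_prop))
      (integrable (by fun_prop)) fun x hx => ?_
    exact add_mul_mul_sq_sub_mul_sq_le hx (huR x hx) (hvR x hx) hc hcd_sq
  have weight_le : Z ≤ weightedSqDist L u v := integral_sq_sub_le_weightedSqDist hL uc0 vc0
  rw [intervalIntegral.integral_add (integrable (by fun_prop)) (by simp),
    intervalIntegral.integral_add (integrable (by fun_prop)) (integrable (by fun_prop)),
    intervalIntegral.integral_const_mul, intervalIntegral.integral_const_mul, ← hZ,
    intervalIntegral.integral_const, sub_zero, smul_eq_mul] at nonlinear_le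
  refine le_trans ?_ (mul_le_mul_of_nonneg_left weight_le (kdvGrowthRate_pos hL M κ R).le)
  unfold kdvGrowthRate
  linarith [sq_nonneg (u₁ 0 - v₁ 0)]

end KdVProfile

/-! ### Propagation of the bound on the time derivative -/

theorem integral_one_add_mul_sub_mul_le {L d : ℝ} (hL : 0 ≤ L) (hd : 0 < d) {u v f : ℝ → ℝ}
    (hu : Continuous u) (hv : Continuous v)
    (hf : IntervalIntegrable (fun x => (1 + x) * (2 * (u x - v x) * f x)) volume 0 L)
    (hf2 : IntervalIntegrable (fun x => f x ^ 2) volume 0 L) :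
    ∫ x in (0 : ℝ)..L, (1 + x) * (2 * (u x - v x) * f x) ≤
      1 / d * weightedSqDist L u v + d * ((1 + L) * ∫ x in (0 : ℝ)..L, f x ^ 2) := by
  have hdist : Continuous fun x => 1 / d * ((1 + x) * (u x - v x) ^ 2) := by fun_prop
  have hsq := (hf2.const_mul (1 + L)).const_mul d
  rw [weightedSqDist, ← intervalIntegral.integral_const_mul, ← intervalIntegral.integral_const_mul,
    ← intervalIntegral.integral_const_mul,
    ← intervalIntegral.integral_add (hdist.intervalIntegrable _ _) hsq]
  refine intervalIntegral.integral_mono_on hL hf ((hdist.intervalIntegrable _ _).add hsq)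
    fun x hx => ?_
  have hweight : 0 ≤ 1 + x := add_nonneg zero_le_one hx.1
  have young : 2 * (u x - v x) * f x ≤ 1 / d * (u x - v x) ^ 2 + d * f x ^ 2 := by
    have h := mul_le_mul_of_nonneg_left (two_mul_le_add_sq (u x - v x) (d * f x))
      (one_div_nonneg.2 hd.le)
    field_simp at h ⊢
    linarith
  calc (1 + x) * (2 * (u x - v x) * f x) ≤
        (1 + x) * (1 / d * (u x - v x) ^ 2) + (1 + x) * (d * f x ^ 2) := by
        rw [← mul_add]
        exact mul_le_mul_of_nonneg_left young hweight
    _ ≤ (1 + x) * (1 / d * (u x - v x) ^ 2) + (1 + L) * (d * f x ^ 2) := by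
        gcongr
        exact hx.2
    _ = 1 / d * ((1 + x) * (u x - v x) ^ 2) + d * ((1 + L) * f x ^ 2) := by ring

theorem continuous_weightedSqDist {L : ℝ} {y z : ℝ → ℝ → ℝ} (hy : Continuous (Function.uncurry y))
    (hz : Continuous (Function.uncurry z)) : Continuous fun s => weightedSqDist L (y s) (z s) :=
  intervalIntegral.continuous_parametric_intervalIntegral_of_continuous'
    ((continuous_const.add continuous_snd).mul ((hy.sub hz).pow 2)) 0 L

/-- The partial derivative `y_t(t, x)` of `y`. -/
noncomputable def timeDeriv (y : ℝ → ℝ → ℝ) (t x : ℝ) : ℝ :=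
  deriv (fun s => y s x) t

/-- The quantity `‖y_t(t, ·)‖²` in `L²(0, L)`. -/
noncomputable def timeDerivEnergy (L : ℝ) (y : ℝ → ℝ → ℝ) (t : ℝ) : ℝ :=
  ∫ x in (0 : ℝ)..L, timeDeriv y t x ^ 2

theorem measurable_timeDeriv {y : ℝ → ℝ → ℝ} (hy : Continuous (Function.uncurry y)) :
    Measurable (Function.uncurry (timeDeriv y)) := by
  have hswap : Continuous (Function.uncurry fun x s => y s x) := hy.comp continuous_swap
  exact (measurable_deriv_with_param hswap).comp measurable_swap

/-- A solution `y` of `y_t + y_x + y_xxx + c(t) y y_x = 0` on `(0, T) × (0, L)` with the boundary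
conditions of the system. The space derivatives of `y` are named `u₁`, `u₂`, `u₃`, and the cutoff
enters only through the bounds `|c| ≤ M` and `|c(s) - c(t)| ≤ κ ‖y(s) - y(t)‖`. As only the values
on `[0, T] × [0, L]` matter, `y` is taken continuous and bounded by `R` on the whole plane. -/
structure KdVFlow (L T M κ R : ℝ) (y u₁ u₂ u₃ : ℝ → ℝ → ℝ) (c : ℝ → ℝ) : Prop where
  continuous : Continuous (Function.uncurry y)
  abs_le : ∀ t x, |y t x| ≤ R
  differentiableAt : ∀ t ∈ Ioo 0 T, ∀ x ∈ Icc 0 L, DifferentiableAt ℝ (fun s => y s x) t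
  continuousOn_timeDeriv : ∀ x ∈ Icc 0 L, ContinuousOn (fun s => timeDeriv y s x) (Ioo 0 T)
  profile : ∀ t ∈ Ioo 0 T, KdVProfile L (y t) (u₁ t) (u₂ t) (u₃ t)
  timeDeriv_eq : ∀ t ∈ Ioo 0 T, EqOn (timeDeriv y t) (kdvRHS (c t) (y t) (u₁ t) (u₃ t)) (Ioo 0 L)
  abs_coeff_le : ∀ t ∈ Ioo 0 T, |c t| ≤ M
  abs_coeff_sub_le : ∀ s ∈ Ioo 0 T, ∀ t ∈ Ioo 0 T, |c s - c t| ≤ κ * L2norm L (y s - y t)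

namespace KdVFlow

variable {L T M κ R : ℝ} {y u₁ u₂ u₃ : ℝ → ℝ → ℝ} {c : ℝ → ℝ}

theorem continuous_apply (hy : KdVFlow L T M κ R y u₁ u₂ u₃ c) (t : ℝ) : Continuous (y t) :=
  hy.continuous.comp (Continuous.prodMk_right t)

theorem hasDerivAt (hy : KdVFlow L T M κ R y u₁ u₂ u₃ c) {t x : ℝ} (ht : t ∈ Ioo 0 T)
    (hx : x ∈ Icc 0 L) : HasDerivAt (fun s => y s x) (timeDeriv y t x) t :=
  (hy.differentiableAt t ht x hx).hasDerivAt

theorem integral_congr_timeDeriv (hy : KdVFlow L T M κ R y u₁ u₂ u₃ c) (hL : 0 ≤ L) {t : ℝ}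
    (ht : t ∈ Ioo 0 T) (F : ℝ → ℝ → ℝ) :
    ∫ x in (0 : ℝ)..L, F x (timeDeriv y t x) =
      ∫ x in (0 : ℝ)..L, F x (kdvRHS (c t) (y t) (u₁ t) (u₃ t) x) := by
  refine intervalIntegral.integral_congr_uIoo fun x hx => ?_
  rw [uIoo_of_le hL] at hx
  simp only [hy.timeDeriv_eq t ht hx]

theorem intervalIntegrable_mul_timeDeriv (hy : KdVFlow L T M κ R y u₁ u₂ u₃ c) (hL : 0 ≤ L)
    {t : ℝ} (ht : t ∈ Ioo 0 T) {f : ℝ → ℝ} (hf : ContinuousOn f (Icc 0 L)) :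
    IntervalIntegrable (fun x => f x * timeDeriv y t x) volume 0 L := by
  refine ((hf.mul ((hy.profile t ht).continuousOn_kdvRHS (c t))).intervalIntegrable_of_Icc
    hL).congr_uIoo fun x hx => ?_
  rw [uIoo_of_le hL] at hx
  simp only [Pi.mul_apply, hy.timeDeriv_eq t ht hx]

theorem intervalIntegrable_timeDeriv_sq (hy : KdVFlow L T M κ R y u₁ u₂ u₃ c) (hL : 0 ≤ L)
    {t : ℝ} (ht : t ∈ Ioo 0 T) :
    IntervalIntegrable (fun x => timeDeriv y t x ^ 2) volume 0 L := by
  refine ((((hy.profile t ht).continuousOn_kdvRHS (c t)).pow 2).intervalIntegrable_of_Icc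
    hL).congr_uIoo fun x hx => ?_
  rw [uIoo_of_le hL] at hx
  simp only [Pi.pow_apply, hy.timeDeriv_eq t ht hx]

theorem bddAbove_range_abs_timeDeriv (hy : KdVFlow L T M κ R y u₁ u₂ u₃ c) {t : ℝ}
    (ht : t ∈ Ioo 0 T) : BddAbove (range fun x : Ioo 0 L => |timeDeriv y t x|) := by
  obtain ⟨B, hB⟩ := isCompact_Icc.exists_bound_of_continuousOn
    ((hy.profile t ht).continuousOn_kdvRHS (c t))
  refine ⟨B, forall_mem_range.2 fun x => ?_⟩
  rw [hy.timeDeriv_eq t ht x.2]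
  exact hB x (Ioo_subset_Icc_self x.2)

theorem integrableOn_timeDeriv_add (hy : KdVFlow L T M κ R y u₁ u₂ u₃ c) (hL : 0 ≤ L) {a b : ℝ}
    (d : ℝ) (hab : Icc (a + d) (b + d) ⊆ Ioo 0 T)
    (hN : ∀ s ∈ Icc (a + d) (b + d), IsBoundedUnder (· ≤ ·) (𝓝 s) (timeDerivEnergy L y)) :
    IntegrableOn (Function.uncurry fun s => timeDeriv y (s + d)) (Ioc a b ×ˢ Ioc 0 L) := by
  obtain ⟨K, hK⟩ := bddAbove_image_of_isCompact_of_isBoundedUnder isCompact_Icc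
    fun s hs => (hN s hs).mono nhdsWithin_le_nhds
  have shift_mem : ∀ s ∈ Ioc a b, s + d ∈ Icc (a + d) (b + d) := fun s hs =>
    ⟨by linarith [hs.1], by linarith [hs.2]⟩
  refine integrableOn_uncurry_of_integral_sq_le (K := K) hL ?_
    (fun s hs => hy.intervalIntegrable_timeDeriv_sq hL (hab (shift_mem s hs)))
    fun s hs => hK (mem_image_of_mem _ (shift_mem s hs))
  have shift_meas : Measurable fun q : ℝ × ℝ => (q.1 + d, q.2) := by fun_prop
  exact (measurable_timeDeriv hy.continuous).comp shift_meas

theorem integrableOn_timeDeriv (hy : KdVFlow L T M κ R y u₁ u₂ u₃ c) (hL : 0 ≤ L) {a b : ℝ}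
    (hab : Icc a b ⊆ Ioo 0 T)
    (hN : ∀ s ∈ Icc a b, IsBoundedUnder (· ≤ ·) (𝓝 s) (timeDerivEnergy L y)) :
    IntegrableOn (Function.uncurry (timeDeriv y)) (Ioc a b ×ˢ Ioc 0 L) := by
  simpa only [add_zero] using
    hy.integrableOn_timeDeriv_add hL (a := a) (b := b) 0 (by simpa using hab) (by simpa using hN)

theorem integral_mul_sub_mul_timeDeriv_sub_le (hy : KdVFlow L T M κ R y u₁ u₂ u₃ c) (hL : 0 ≤ L)
    {s t : ℝ} (hs : s ∈ Ioo 0 T) (ht : t ∈ Ioo 0 T) :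
    ∫ x in (0 : ℝ)..L, (1 + x) * (2 * (y s x - y t x) * (timeDeriv y s x - timeDeriv y t x)) ≤
      kdvGrowthRate L M κ R * weightedSqDist L (y s) (y t) := by
  refine le_trans (le_of_eq (intervalIntegral.integral_congr_uIoo fun x hx => ?_))
    ((hy.profile s hs).integral_one_add_mul_sub_mul_kdvRHS_sub_le (hy.profile t ht) hL
      (hy.abs_coeff_le s hs) (hy.abs_coeff_sub_le s hs t ht) (fun x _ => hy.abs_le s x)
      fun x _ => hy.abs_le t x)
  rw [uIoo_of_le hL] at hx
  simp only [hy.timeDeriv_eq s hs hx, hy.timeDeriv_eq t ht hx]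

theorem integral_mul_sub_mul_timeDeriv_le (hy : KdVFlow L T M κ R y u₁ u₂ u₃ c) (hL : 0 ≤ L)
    {s t d : ℝ} (hs : s ∈ Ioo 0 T) (ht : t ∈ Ioo 0 T) (hd : 0 < d) :
    ∫ x in (0 : ℝ)..L, (1 + x) * (2 * (y s x - y t x) * timeDeriv y s x) ≤
      (kdvGrowthRate L M κ R + 1 / d) * weightedSqDist L (y s) (y t) +
        d * ((1 + L) * timeDerivEnergy L y t) := by
  have hys := hy.continuous_apply s
  have hyt := hy.continuous_apply t
  have hdiff : Continuous fun x => (1 + x) * (2 * (y s x - y t x)) := by fun_prop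
  have integrable : ∀ r ∈ Ioo 0 T, IntervalIntegrable
      (fun x => (1 + x) * (2 * (y s x - y t x) * timeDeriv y r x)) volume 0 L := fun r hr => by
    simpa only [mul_assoc] using hy.intervalIntegrable_mul_timeDeriv hL hr hdiff.continuousOn
  have young := integral_one_add_mul_sub_mul_le hL hd hys hyt (integrable t ht)
    (hy.intervalIntegrable_timeDeriv_sq hL ht)
  have split : ∀ x, (1 + x) * (2 * (y s x - y t x) * timeDeriv y s x) =
      (1 + x) * (2 * (y s x - y t x) * (timeDeriv y s x - timeDeriv y t x)) +
        (1 + x) * (2 * (y s x - y t x) * timeDeriv y t x) := fun x => by ring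
  simp only [split]
  rw [intervalIntegral.integral_add _ (integrable t ht)]
  · rw [timeDerivEnergy]
    linarith [hy.integral_mul_sub_mul_timeDeriv_sub_le hL hs ht]
  · simpa only [mul_sub] using (integrable s hs).sub (integrable t ht)

theorem weightedSqDist_add_le (hy : KdVFlow L T M κ R y u₁ u₂ u₃ c) (hL : 0 ≤ L) {a d : ℝ}
    (hd : 0 < d) (had : Ico a (a + d) ⊆ Ioo 0 T)
    (hN : ∀ s ∈ Ioo a (a + d), IsBoundedUnder (· ≤ ·) (𝓝 s) (timeDerivEnergy L y)) :
    weightedSqDist L (y (a + d)) (y a) ≤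
      d ^ 2 * ((1 + L) * timeDerivEnergy L y a) * exp (kdvGrowthRate L M κ R * d + 1) := by
  have ha : a ∈ Ioo 0 T := had (left_mem_Ico.2 (by linarith))
  have hK := kdvGrowthRate_pos hL M κ R
  have hconst : Continuous (Function.uncurry fun _ : ℝ => y a) :=
    (hy.continuous_apply a).comp continuous_snd
  have dist_cont := continuous_weightedSqDist (L := L) hy.continuous hconst
  have energy_nonneg : 0 ≤ timeDerivEnergy L y a := integral_sq_nonneg hL _
  have growth := le_gronwallBound_of_sub_le_integral (K := kdvGrowthRate L M κ R + 1 / d)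
    (ε := d * ((1 + L) * timeDerivEnergy L y a)) dist_cont (lt_add_of_pos_right a hd)
    fun x z hax hxz hz => by
      have hsub : Icc x z ⊆ Ioo a (a + d) := fun s hs =>
        ⟨hax.trans_le hs.1, hs.2.trans_lt hz⟩
      have hsubT : Icc x z ⊆ Ioo 0 T := (hsub.trans Ioo_subset_Ico_self).trans had
      exact integral_mul_sq_sub_integral_mul_sq_le (p := fun x => 1 + x)
        (Y := fun s => y s - y a) (Y' := timeDeriv y) hxz.le hL (by fun_prop)
        ((dist_cont.const_mul _).add continuous_const)
        (hy.continuous.sub hconst) (fun s hs r hr => (hy.hasDerivAt (hsubT hs) hr).sub_const _)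
        (fun r hr => (hy.continuousOn_timeDeriv r hr).mono hsubT)
        (hy.integrableOn_timeDeriv hL hsubT fun s hs => hN s (hsub hs))
        fun s hs => hy.integral_mul_sub_mul_timeDeriv_le hL (hsubT hs) ha hd
  have dist_self : weightedSqDist L (y a) (y a) = 0 := by simp [weightedSqDist]
  rw [dist_self, add_sub_cancel_left] at growth
  calc weightedSqDist L (y (a + d)) (y a) ≤ _ := growth
    _ ≤ _ := gronwallBound_zero_le (by positivity) (by positivity)
    _ = _ := by
      rw [show (kdvGrowthRate L M κ R + 1 / d) * d = kdvGrowthRate L M κ R * d + 1 by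
        rw [add_mul, one_div_mul_cancel hd.ne']]
      ring

theorem weightedSqDist_translate_le (hy : KdVFlow L T M κ R y u₁ u₂ u₃ c) (hL : 0 ≤ L)
    {a b d : ℝ} (hab : a < b) (hd : 0 ≤ d) (hsubT : Ioo a (b + d) ⊆ Ioo 0 T)
    (hN : ∀ s ∈ Ioo a (b + d), IsBoundedUnder (· ≤ ·) (𝓝 s) (timeDerivEnergy L y)) :
    weightedSqDist L (y (b + d)) (y b) ≤
      weightedSqDist L (y (a + d)) (y a) * exp (kdvGrowthRate L M κ R * (b - a)) := by
  have shift_cont : Continuous (Function.uncurry fun s => y (s + d)) :=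
    hy.continuous.comp ((continuous_fst.add continuous_const).prodMk continuous_snd)
  have dist_cont := continuous_weightedSqDist (L := L) shift_cont hy.continuous
  have growth := le_gronwallBound_of_sub_le_integral (K := kdvGrowthRate L M κ R) (ε := 0)
    dist_cont hab fun x z hax hxz hz => by
      have hsub : Icc x z ⊆ Ioo a (b + d) := fun s hs =>
        ⟨hax.trans_le hs.1, hs.2.trans_lt (by linarith)⟩
      have hsub_add : Icc (x + d) (z + d) ⊆ Ioo a (b + d) := fun s hs =>
        ⟨by linarith [hs.1], by linarith [hs.2]⟩
      have mem_add : ∀ s ∈ Icc x z, s + d ∈ Ioo 0 T := fun s hs =>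
        hsubT (hsub_add ⟨by linarith [hs.1], by linarith [hs.2]⟩)
      have mem : ∀ s ∈ Icc x z, s ∈ Ioo 0 T := hsub.trans hsubT
      refine integral_mul_sq_sub_integral_mul_sq_le (p := fun x => 1 + x)
        (Y := fun s => y (s + d) - y s) (Y' := fun s => timeDeriv y (s + d) - timeDeriv y s)
        hxz.le hL (by fun_prop) ((dist_cont.const_mul _).add continuous_const)
        (shift_cont.sub hy.continuous)
        (fun s hs r hr => ((hy.hasDerivAt (mem_add s hs) hr).comp_add_const s d).sub
          (hy.hasDerivAt (mem s hs) hr))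
        (fun r hr => ((hy.continuousOn_timeDeriv r hr).comp (by fun_prop) mem_add).sub
          ((hy.continuousOn_timeDeriv r hr).mono mem))
        ((hy.integrableOn_timeDeriv_add hL d (hsub_add.trans hsubT) fun s hs =>
          hN s (hsub_add hs)).sub
          (hy.integrableOn_timeDeriv hL mem fun s hs => hN s (hsub hs)))
        fun s hs => ?_
      rw [add_zero]
      exact hy.integral_mul_sub_mul_timeDeriv_sub_le hL (mem_add s hs) (mem s hs)
  rwa [gronwallBound_ε0] at growth

theorem timeDerivEnergy_le (hy : KdVFlow L T M κ R y u₁ u₂ u₃ c) (hL : 0 ≤ L) {a t : ℝ}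
    (hat : a < t) (hsubT : Icc a t ⊆ Ioo 0 T)
    (hN : ∀ s ∈ Ioo a t, IsBoundedUnder (· ≤ ·) (𝓝 s) (timeDerivEnergy L y)) :
    timeDerivEnergy L y t ≤
      (1 + L) * timeDerivEnergy L y a * exp (kdvGrowthRate L M κ R * (t - a) + 1) := by
  have ht : t ∈ Ioo 0 T := hsubT (right_mem_Icc.2 hat.le)
  have energy_nonneg : 0 ≤ timeDerivEnergy L y a := integral_sq_nonneg hL _
  have increment_le : ∀ᶠ δ in 𝓝[<] (0 : ℝ), ∫ x in (0 : ℝ)..L, (y (t + δ) x - y t x) ^ 2 ≤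
      δ ^ 2 * ((1 + L) * timeDerivEnergy L y a *
        exp (kdvGrowthRate L M κ R * (t - a) + 1)) := by
    filter_upwards [Ioo_mem_nhdsLT (show a - t < 0 by linarith)] with δ hδ
    have had : Ico a (a + -δ) ⊆ Icc a t := fun s hs => ⟨hs.1, by linarith [hs.2, hδ.1]⟩
    have base := hy.weightedSqDist_add_le hL (neg_pos.2 hδ.2) (had.trans hsubT)
      fun s hs => hN s ⟨hs.1, by linarith [hs.2, hδ.1]⟩
    have translate := hy.weightedSqDist_translate_le hL (a := a) (b := t + δ) (d := -δ)
      (by linarith [hδ.1]) (by linarith [hδ.2])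
      (by simpa using Ioo_subset_Icc_self.trans hsubT) (by simpa using hN)
    rw [add_neg_cancel_right] at translate
    calc ∫ x in (0 : ℝ)..L, (y (t + δ) x - y t x) ^ 2
        = ∫ x in (0 : ℝ)..L, (y t x - y (t + δ) x) ^ 2 := by simp only [sub_sq_comm]
      _ ≤ weightedSqDist L (y t) (y (t + δ)) := integral_sq_sub_le_weightedSqDist hL
          (hy.continuous_apply t).continuousOn (hy.continuous_apply (t + δ)).continuousOn
      _ ≤ _ := translate
      _ ≤ _ := mul_le_mul_of_nonneg_right base (exp_pos _).le
      _ = _ := by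
        rw [mul_assoc, ← exp_add]
        ring_nf
  refine integral_sq_deriv_le_of_frequently_integral_sq_sub_le hL (by positivity)
    hy.continuous_apply (fun x hx => hy.hasDerivAt ht (Ioc_subset_Icc_self hx))
    (hy.intervalIntegrable_timeDeriv_sq hL ht) ?_
  exact increment_le.frequently.filter_mono (nhdsWithin_mono 0 fun δ (hδ : δ < 0) => hδ.ne)

theorem exists_isBoundedUnder_nhdsWithin_timeDerivEnergy
    (hy : KdVFlow L T M κ R y u₁ u₂ u₃ c) (hL : 0 ≤ L) {S : Set ℝ} (hST : S ⊆ Ioo 0 T)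
    (hne : S.Nonempty) (hS : IsLocallyClosed S) :
    ∃ t ∈ S, IsBoundedUnder (· ≤ ·) (𝓝[S] t) (timeDerivEnergy L y) := by
  obtain ⟨t, htS, B, hB⟩ := exists_eventually_nhdsWithin_forall_le_of_continuousOn hS hne
    (f := fun (x : Ioo 0 L) s => |timeDeriv y s x|)
    (fun x => ((hy.continuousOn_timeDeriv x (Ioo_subset_Icc_self x.2)).mono hST).abs)
    fun s hs => hy.bddAbove_range_abs_timeDeriv (hST hs)
  refine ⟨t, htS, ∫ x in (0 : ℝ)..L, B ^ 2, eventually_map.2 ?_⟩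
  filter_upwards [hB, self_mem_nhdsWithin] with s hs hsS
  refine intervalIntegral.integral_mono_on_of_le_Ioo hL
    (hy.intervalIntegrable_timeDeriv_sq hL (hST hsS)) (by simp) fun x hx => ?_
  rw [← sq_abs]
  have := hs ⟨x, hx⟩
  gcongr

theorem isBoundedUnder_nhds_timeDerivEnergy (hy : KdVFlow L T M κ R y u₁ u₂ u₃ c) (hL : 0 ≤ L) :
    ∀ t ∈ Ioo 0 T, IsBoundedUnder (· ≤ ·) (𝓝 t) (timeDerivEnergy L y) := by
  have hK := kdvGrowthRate_pos hL M κ R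
  refine isBoundedUnder_nhds_of_propagation isOpen_Ioo
    (fun S => hy.exists_isBoundedUnder_nhdsWithin_timeDerivEnergy hL) fun m =>
      ⟨(1 + L) * m * exp (kdvGrowthRate L M κ R * T + 1), fun a t hat hsub hN ham => ?_⟩
  have hm : 0 ≤ m := (integral_sq_nonneg hL _).trans ham
  have hlen : t - a ≤ T := by
    linarith [(hsub (left_mem_Icc.2 hat.le)).1, (hsub (right_mem_Icc.2 hat.le)).2]
  calc timeDerivEnergy L y t ≤
        (1 + L) * timeDerivEnergy L y a * exp (kdvGrowthRate L M κ R * (t - a) + 1) :=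
        hy.timeDerivEnergy_le hL hat hsub fun s hs => hN s (Ioo_subset_Ioc_self hs)
    _ ≤ (1 + L) * m * exp (kdvGrowthRate L M κ R * T + 1) := by gcongr

/-! ### Energy and virial estimates -/

theorem multiplier_identity (hy : KdVFlow L T M κ R y u₁ u₂ u₃ c) (hL : 0 ≤ L) {p : ℝ → ℝ}
    (hp : Continuous p) {a b : ℝ} (hab : a ≤ b) (hsub : Icc a b ⊆ Ioo 0 T) :
    IntervalIntegrable (fun t => ∫ x in (0 : ℝ)..L,
        p x * (2 * y t x * kdvRHS (c t) (y t) (u₁ t) (u₃ t) x)) volume a b ∧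
      (∫ x in (0 : ℝ)..L, p x * y b x ^ 2) - (∫ x in (0 : ℝ)..L, p x * y a x ^ 2) =
        ∫ t in a..b, ∫ x in (0 : ℝ)..L,
          p x * (2 * y t x * kdvRHS (c t) (y t) (u₁ t) (u₃ t) x) := by
  have hcongr : EqOn
      (fun t => ∫ x in (0 : ℝ)..L, p x * (2 * y t x * timeDeriv y t x))
      (fun t => ∫ x in (0 : ℝ)..L, p x * (2 * y t x * kdvRHS (c t) (y t) (u₁ t) (u₃ t) x))
      (uIcc a b) := fun t ht =>
    hy.integral_congr_timeDeriv hL (hsub (by rwa [uIcc_of_le hab] at ht))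
      fun x r => p x * (2 * y t x * r)
  obtain ⟨hint, heq⟩ := integral_mul_sq_sub_integral_mul_sq hab hL hp hy.continuous
    (fun t ht x hx => hy.hasDerivAt (hsub ht) hx)
    (fun x hx => (hy.continuousOn_timeDeriv x hx).mono hsub)
    (hy.integrableOn_timeDeriv hL hsub fun t ht =>
      hy.isBoundedUnder_nhds_timeDerivEnergy hL t (hsub ht))
  exact ⟨hint.congr (hcongr.mono uIoc_subset_uIcc),
    heq.trans (intervalIntegral.integral_congr hcongr)⟩

theorem integral_sq_le (hy : KdVFlow L T M κ R y u₁ u₂ u₃ c) (hL : 0 ≤ L) {t : ℝ}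
    (ht : t ∈ Icc 0 T) : ∫ x in (0 : ℝ)..L, y t x ^ 2 ≤ ∫ x in (0 : ℝ)..L, y 0 x ^ 2 := by
  have energy_cont : Continuous fun s => ∫ x in (0 : ℝ)..L, y s x ^ 2 :=
    intervalIntegral.continuous_parametric_intervalIntegral_of_continuous' (hy.continuous.pow 2) 0 L
  rcases ht.1.eq_or_lt with rfl | ht0
  · rfl
  refine le_of_forall_Ioo_le (F := fun _ z => ∫ x in (0 : ℝ)..L, y z x ^ 2)
    (G := fun s _ => ∫ x in (0 : ℝ)..L, y s x ^ 2) (energy_cont.comp continuous_snd)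
    (energy_cont.comp continuous_fst) ht0 fun s z hs hsz hz => ?_
  have hsub : Icc s z ⊆ Ioo 0 T := Icc_subset_Ioo hs (hz.trans_le ht.2)
  obtain ⟨hdecay, balance⟩ :=
    hy.multiplier_identity hL (p := fun _ => 1) continuous_const hsz.le hsub
  simp only [one_mul] at hdecay balance
  rw [← sub_nonpos, balance]
  refine (intervalIntegral.integral_mono_on hsz.le hdecay intervalIntegrable_const fun r hr =>
    (hy.profile r (hsub hr)).integral_mul_kdvRHS_nonpos hL (c r)).trans_eq ?_
  exact intervalIntegral.integral_zero

theorem aestronglyMeasurable_integral_sq_add_sq (hy : KdVFlow L T M κ R y u₁ u₂ u₃ c)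
    (hL : 0 ≤ L) :
    AEStronglyMeasurable (fun t => ∫ x in (0 : ℝ)..L, (y t x ^ 2 + u₁ t x ^ 2))
      (volume.restrict (Ioo 0 T)) := by
  have hmeas : Measurable fun q : ℝ × ℝ => y q.1 q.2 ^ 2 + deriv (y q.1) q.2 ^ 2 :=
    (hy.continuous.measurable.pow_const 2).add
      ((measurable_deriv_with_param hy.continuous).pow_const 2)
  have hint : StronglyMeasurable fun t => ∫ x in (0 : ℝ)..L, (y t x ^ 2 + deriv (y t) x ^ 2) := by
    simp only [intervalIntegral.integral_of_le hL]
    exact hmeas.stronglyMeasurable.integral_prod_right'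
  refine hint.aestronglyMeasurable.congr
    (ae_restrict_of_forall_mem measurableSet_Ioo fun t ht => ?_)
  refine intervalIntegral.integral_congr_uIoo fun x hx => ?_
  rw [uIoo_of_le hL] at hx
  simp only [((hy.profile t ht).hasDerivAt x hx).deriv]

theorem integral_id_mul_kdvRHS_le (hy : KdVFlow L T M κ R y u₁ u₂ u₃ c) (hL : 0 ≤ L) {t : ℝ}
    (ht : t ∈ Ioo 0 T) :
    ∫ x in (0 : ℝ)..L, x * (2 * y t x * kdvRHS (c t) (y t) (u₁ t) (u₃ t) x) ≤
      -(3 / 2) * (∫ x in (0 : ℝ)..L, (y t x ^ 2 + u₁ t x ^ 2))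
        + (5 / 2 * (∫ x in (0 : ℝ)..L, y 0 x ^ 2)
          + 2 * L * M ^ 2 / 27 * (∫ x in (0 : ℝ)..L, y 0 x ^ 2) ^ 2) := by
  have virial := (hy.profile t ht).integral_id_mul_kdvRHS_le hL (hy.abs_coeff_le t ht)
  have energy_le := hy.integral_sq_le hL (Ioo_subset_Icc_self ht)
  have energy_nonneg := integral_sq_nonneg hL (y t)
  have energy_sq_le : 2 * L * M ^ 2 / 27 * (∫ x in (0 : ℝ)..L, y t x ^ 2) ^ 2 ≤
      2 * L * M ^ 2 / 27 * (∫ x in (0 : ℝ)..L, y 0 x ^ 2) ^ 2 := by gcongr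
  linarith

theorem integral_id_mul_sq_le (hy : KdVFlow L T M κ R y u₁ u₂ u₃ c) (hL : 0 ≤ L) {t : ℝ}
    (ht : t ∈ Icc 0 T) :
    ∫ x in (0 : ℝ)..L, x * y t x ^ 2 ≤ L * ∫ x in (0 : ℝ)..L, y 0 x ^ 2 := by
  have hc := hy.continuous_apply t
  calc ∫ x in (0 : ℝ)..L, x * y t x ^ 2 ≤ ∫ x in (0 : ℝ)..L, L * y t x ^ 2 :=
        intervalIntegral.integral_mono_on hL (by apply Continuous.intervalIntegrable; fun_prop)
          (by apply Continuous.intervalIntegrable; fun_prop) fun x hx =>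
            mul_le_mul_of_nonneg_right hx.2 (sq_nonneg _)
    _ = L * ∫ x in (0 : ℝ)..L, y t x ^ 2 := intervalIntegral.integral_const_mul _ _
    _ ≤ _ := mul_le_mul_of_nonneg_left (hy.integral_sq_le hL ht) hL

theorem intervalIntegrable_and_integral_le_of_Icc_subset (hy : KdVFlow L T M κ R y u₁ u₂ u₃ c)
    (hL : 0 ≤ L) {a b : ℝ} (hab : a ≤ b) (hsub : Icc a b ⊆ Ioo 0 T) :
    IntervalIntegrable (fun t => ∫ x in (0 : ℝ)..L, (y t x ^ 2 + u₁ t x ^ 2)) volume a b ∧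
      ∫ t in a..b, ∫ x in (0 : ℝ)..L, (y t x ^ 2 + u₁ t x ^ 2) ≤
        (5 * T + 2 * L) / 3 * (∫ x in (0 : ℝ)..L, y 0 x ^ 2)
          + 4 * L * M ^ 2 / 81 * T * (∫ x in (0 : ℝ)..L, y 0 x ^ 2) ^ 2 := by
  obtain ⟨hW, balance⟩ := hy.multiplier_identity hL continuous_id hab hsub
  simp only [id_eq] at hW balance
  set Q : ℝ → ℝ := fun t => ∫ x in (0 : ℝ)..L, (y t x ^ 2 + u₁ t x ^ 2)
  set W : ℝ → ℝ := fun t => ∫ x in (0 : ℝ)..L,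
    x * (2 * y t x * kdvRHS (c t) (y t) (u₁ t) (u₃ t) x)
  set E := ∫ x in (0 : ℝ)..L, y 0 x ^ 2
  set D := 5 / 2 * E + 2 * L * M ^ 2 / 27 * E ^ 2 with hD
  have hE0 : 0 ≤ E := integral_sq_nonneg hL _
  obtain ⟨Q_int, Q_le⟩ := intervalIntegrable_and_integral_le_integral_of_le (f := Q)
    (g := fun t => 2 / 3 * (D - W t)) hab
    ((hy.aestronglyMeasurable_integral_sq_add_sq hL).mono_set (Ioc_subset_Icc_self.trans hsub))
    ((intervalIntegrable_const.sub hW).const_mul _)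
    (fun t _ => intervalIntegral.integral_nonneg hL fun _ _ => by positivity)
    fun t ht => by linarith [hy.integral_id_mul_kdvRHS_le hL (hsub ht)]
  refine ⟨Q_int, Q_le.trans ?_⟩
  have ha := Ioo_subset_Icc_self (hsub (left_mem_Icc.2 hab))
  have hb := Ioo_subset_Icc_self (hsub (right_mem_Icc.2 hab))
  have final_nonneg : 0 ≤ ∫ x in (0 : ℝ)..L, x * y b x ^ 2 :=
    intervalIntegral.integral_nonneg hL fun x hx => mul_nonneg hx.1 (sq_nonneg _)
  calc ∫ t in a..b, 2 / 3 * (D - W t)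
      = 2 / 3 * ((b - a) * D - ((∫ x in (0 : ℝ)..L, x * y b x ^ 2) -
          ∫ x in (0 : ℝ)..L, x * y a x ^ 2)) := by
        rw [intervalIntegral.integral_const_mul,
          intervalIntegral.integral_sub intervalIntegrable_const hW,
          intervalIntegral.integral_const, balance, smul_eq_mul]
    _ ≤ 2 / 3 * (T * D + L * E) := by
        have := hy.integral_id_mul_sq_le hL ha
        have : (b - a) * D ≤ T * D :=
          mul_le_mul_of_nonneg_right (by linarith [ha.1, hb.2]) (by positivity)
        linarith
    _ = _ := by rw [hD]; ring

theorem intervalIntegrable_and_integral_le (hy : KdVFlow L T M κ R y u₁ u₂ u₃ c) (hL : 0 ≤ L)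
    (hT : 0 < T) :
    IntervalIntegrable (fun t => ∫ x in (0 : ℝ)..L, (y t x ^ 2 + u₁ t x ^ 2)) volume 0 T ∧
      ∫ t in (0 : ℝ)..T, ∫ x in (0 : ℝ)..L, (y t x ^ 2 + u₁ t x ^ 2) ≤
        (5 * T + 2 * L) / 3 * (∫ x in (0 : ℝ)..L, y 0 x ^ 2)
          + 4 * L * M ^ 2 / 81 * T * (∫ x in (0 : ℝ)..L, y 0 x ^ 2) ^ 2 :=
  intervalIntegrable_and_integral_le_of_forall_Ioo hT
    (fun _ => intervalIntegral.integral_nonneg hL fun _ _ => by positivity)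
    fun _ _ hx hxz hz =>
      hy.intervalIntegrable_and_integral_le_of_Icc_subset hL hxz.le (Icc_subset_Ioo hx hz)

end KdVFlow

/-! ### Solutions of the modified system as flows -/

theorem L2norm_le_of_abs_le {L R : ℝ} (hL : 0 ≤ L) {f : ℝ → ℝ} (hf : Continuous f)
    (hR : ∀ x, |f x| ≤ R) : L2norm L f ≤ √(L * R ^ 2) := by
  refine Real.sqrt_le_sqrt ?_
  calc ∫ x in (0 : ℝ)..L, f x ^ 2 ≤ ∫ _ in (0 : ℝ)..L, R ^ 2 :=
        intervalIntegral.integral_mono_on hL ((hf.pow 2).intervalIntegrable _ _)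
          intervalIntegrable_const fun x _ => sq_le_sq' (abs_le.1 (hR x)).1 (abs_le.1 (hR x)).2
    _ = L * R ^ 2 := by rw [intervalIntegral.integral_const, sub_zero, smul_eq_mul]

theorem exists_abs_comp_L2norm_sub_le {L ε : ℝ} (hL : 0 ≤ L) (hε : 0 < ε) {Φ : ℝ → ℝ}
    (hΦ : LocallyLipschitzOn (Ici 0) Φ) (R : ℝ) :
    ∃ κ, ∀ f g : ℝ → ℝ, Continuous f → Continuous g → (∀ x, |f x| ≤ R) → (∀ x, |g x| ≤ R) →
      |Φ (L2norm L f / ε) - Φ (L2norm L g / ε)| ≤ κ * L2norm L (f - g) := by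
  obtain ⟨K, hK⟩ := (hΦ.mono (Icc_subset_Ici_self
    (a := √(L * R ^ 2) / ε))).exists_lipschitzOnWith_of_compact isCompact_Icc
  have mem : ∀ f : ℝ → ℝ, Continuous f → (∀ x, |f x| ≤ R) →
      L2norm L f / ε ∈ Icc 0 (√(L * R ^ 2) / ε) := fun f hf hR =>
    ⟨div_nonneg (L2norm_nonneg L f) hε.le,
      div_le_div_of_nonneg_right (L2norm_le_of_abs_le hL hf hR) hε.le⟩
  refine ⟨K / ε, fun f g hf hg hfR hgR => ?_⟩
  calc |Φ (L2norm L f / ε) - Φ (L2norm L g / ε)| ≤ K * |L2norm L f / ε - L2norm L g / ε| :=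
        hK.dist_le_mul _ (mem f hf hfR) _ (mem g hg hgR)
    _ = K / ε * |L2norm L f - L2norm L g| := by
        rw [← sub_div, abs_div, abs_of_pos hε]
        ring
    _ ≤ K / ε * L2norm L (f - g) := by
        gcongr
        exact abs_L2norm_sub_le hL hf hg

/-- The extension of `y` from `[0, T] × [0, L]` to the plane obtained by projecting each coordinate
to its interval. -/
noncomputable def rectExtend {T L : ℝ} (hT : 0 ≤ T) (hL : 0 ≤ L) (y : ℝ → ℝ → ℝ) (t x : ℝ) : ℝ :=
  y (projIcc 0 T hT t) (projIcc 0 L hL x)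

section RectExtend

variable {T L : ℝ} {hT : 0 ≤ T} {hL : 0 ≤ L} {y : ℝ → ℝ → ℝ}

theorem eqOn_rectExtend {t : ℝ} (ht : t ∈ Icc 0 T) : EqOn (rectExtend hT hL y t) (y t) (Icc 0 L) :=
  fun x hx => by simp only [rectExtend, projIcc_of_mem hT ht, projIcc_of_mem hL hx]

theorem continuous_rectExtend
    (hy : ContinuousOn (fun p : ℝ × ℝ => y p.1 p.2) (Icc 0 T ×ˢ Icc 0 L)) :
    Continuous (Function.uncurry (rectExtend hT hL y)) := by
  have hproj : Continuous fun p : ℝ × ℝ =>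
      ((projIcc 0 T hT p.1 : ℝ), (projIcc 0 L hL p.2 : ℝ)) := by fun_prop
  exact hy.comp_continuous hproj fun p => ⟨(projIcc 0 T hT p.1).2, (projIcc 0 L hL p.2).2⟩

theorem exists_abs_rectExtend_le
    (hy : ContinuousOn (fun p : ℝ × ℝ => y p.1 p.2) (Icc 0 T ×ˢ Icc 0 L)) :
    ∃ R, ∀ t x, |rectExtend hT hL y t x| ≤ R := by
  obtain ⟨R, hR⟩ := (isCompact_Icc.prod isCompact_Icc).exists_bound_of_continuousOn hy
  exact ⟨R, fun t x => hR (projIcc 0 T hT t, projIcc 0 L hL x)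
    ⟨(projIcc 0 T hT t).2, (projIcc 0 L hL x).2⟩⟩

theorem hasDerivAt_rectExtend {t x : ℝ}
    (hd : DifferentiableOn ℝ (fun s => y s x) (Icc 0 T)) (ht : t ∈ Ioo 0 T) (hx : x ∈ Icc 0 L) :
    HasDerivAt (fun s => rectExtend hT hL y s x) (derivWithin (fun s => y s x) (Icc 0 T) t) t := by
  have hmem := Icc_mem_nhds ht.1 ht.2
  refine ((hd t (Ioo_subset_Icc_self ht)).hasDerivWithinAt.hasDerivAt hmem).congr_of_eventuallyEq ?_
  filter_upwards [hmem] with s hs using eqOn_rectExtend hs hx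

end RectExtend

theorem IsModifiedKdVSol.exists_kdvFlow {L T ε M : ℝ} {Φ : ℝ → ℝ} {y : ℝ → ℝ → ℝ}
    (hy : IsModifiedKdVSol L T ε Φ y) (hL : 0 < L) (hT : 0 < T) (hε : 0 < ε)
    (hΦ : LocallyLipschitzOn (Ici 0) Φ) (hM : ∀ r ∈ Ici (0 : ℝ), |Φ r| ≤ M) :
    ∃ κ R, KdVFlow L T M κ R (rectExtend hT.le hL.le y) (fun t => derivWithin (y t) (Icc 0 L))
      (fun t => iteratedDerivWithin 2 (y t) (Icc 0 L))
      (fun t => iteratedDerivWithin 3 (y t) (Icc 0 L)) fun t => Φ (L2norm L (y t) / ε) := by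
  obtain ⟨smooth_space, smooth_time, hcont, pde, boundary⟩ := hy
  have ext_cont : Continuous (Function.uncurry (rectExtend hT.le hL.le y)) :=
    continuous_rectExtend hcont
  have ext_space : ∀ t, Continuous (rectExtend hT.le hL.le y t) := fun t =>
    ext_cont.comp (Continuous.prodMk_right t)
  have ext_deriv : ∀ t ∈ Ioo 0 T, ∀ x ∈ Icc 0 L,
      HasDerivAt (fun s => rectExtend hT.le hL.le y s x)
        (derivWithin (fun s => y s x) (Icc 0 T) t) t := fun t ht x hx =>
    hasDerivAt_rectExtend ((smooth_time x hx).differentiableOn one_ne_zero) ht hx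
  obtain ⟨R, hR⟩ := exists_abs_rectExtend_le (hT := hT.le) (hL := hL.le) hcont
  obtain ⟨κ, hκ⟩ := exists_abs_comp_L2norm_sub_le hL.le hε hΦ R
  refine ⟨κ, R, ext_cont, hR, fun t ht x hx => (ext_deriv t ht x hx).differentiableAt,
    fun x hx => ?_, fun t ht => ?_, fun t ht x hx => ?_,
    fun t _ => hM _ (div_nonneg (L2norm_nonneg L (y t)) hε.le), fun s hs t ht => ?_⟩
  · exact (((smooth_time x hx).continuousOn_derivWithin (uniqueDiffOn_Icc hT) le_rfl).mono
      Ioo_subset_Icc_self).congr fun t ht => (ext_deriv t ht x hx).deriv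
  · obtain ⟨left, right, deriv_right⟩ := boundary t (Ioo_subset_Icc_self ht)
    exact (KdVProfile.of_contDiffOn hL (smooth_space t (Ioo_subset_Icc_self ht)) left right
      deriv_right).congr hL.le (eqOn_rectExtend (Ioo_subset_Icc_self ht))
  · rw [timeDeriv, (ext_deriv t ht x (Ioo_subset_Icc_self hx)).deriv, kdvRHS,
      eqOn_rectExtend (Ioo_subset_Icc_self ht) (Ioo_subset_Icc_self hx)]
    linarith [pde t ht x hx]
  · have norm_eq : ∀ r ∈ Ioo 0 T, L2norm L (y r) = L2norm L (rectExtend hT.le hL.le y r) :=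
      fun r hr => (L2norm_congr hL.le (eqOn_rectExtend (Ioo_subset_Icc_self hr))).symm
    rw [norm_eq s hs, norm_eq t ht]
    exact hκ _ _ (ext_space s) (ext_space t) (hR s) (hR t)

theorem IsCutoff.locallyLipschitzOn {Φ : ℝ → ℝ} (hΦ : IsCutoff Φ) (s : Set ℝ) :
    LocallyLipschitzOn s Φ :=
  ((hΦ.1.of_le (by exact_mod_cast le_top)).locallyLipschitz (𝕂 := ℝ)).locallyLipschitzOn

theorem IsCutoff.abs_le_one {Φ : ℝ → ℝ} (hΦ : IsCutoff Φ) {r : ℝ} (hr : r ∈ Ici (0 : ℝ)) :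
    |Φ r| ≤ 1 := by
  rw [abs_of_nonneg (hΦ.2.1 r hr).1]
  exact (hΦ.2.1 r hr).2

theorem modifiedKdV_spacetime_H1_bound_general {L T ε M : ℝ} (hL : 0 < L) (hT : 0 < T)
    (hε : 0 < ε) {Φ : ℝ → ℝ} (hΦ : LocallyLipschitzOn (Ici 0) Φ)
    (hM : ∀ r ∈ Ici (0 : ℝ), |Φ r| ≤ M) {y₀ : ℝ → ℝ} {y : ℝ → ℝ → ℝ}
    (hy : IsModifiedKdVSol L T ε Φ y) (hy₀ : EqOn (y 0) y₀ (Icc 0 L)) :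
    IntervalIntegrable (fun t => ∫ x in (0 : ℝ)..L,
        ((y t x) ^ 2 + (derivWithin (y t) (Icc 0 L) x) ^ 2)) volume 0 T ∧
      (∫ t in (0 : ℝ)..T, ∫ x in (0 : ℝ)..L,
          ((y t x) ^ 2 + (derivWithin (y t) (Icc 0 L) x) ^ 2)) ≤
        (5 * T + 2 * L) / 3 * (∫ x in (0 : ℝ)..L, y₀ x ^ 2)
          + 4 * L * M ^ 2 / 81 * T * (∫ x in (0 : ℝ)..L, y₀ x ^ 2) ^ 2 := by
  obtain ⟨κ, R, flow⟩ := hy.exists_kdvFlow hL hT hε hΦ hM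
  obtain ⟨hint, hle⟩ := flow.intervalIntegrable_and_integral_le hL.le hT
  have h1_congr : EqOn
      (fun t => ∫ x in (0 : ℝ)..L,
        (rectExtend hT.le hL.le y t x ^ 2 + derivWithin (y t) (Icc 0 L) x ^ 2))
      (fun t => ∫ x in (0 : ℝ)..L, (y t x ^ 2 + derivWithin (y t) (Icc 0 L) x ^ 2))
      (uIcc 0 T) := fun t ht => intervalIntegral.integral_congr fun x hx => by
    rw [uIcc_of_le hT.le] at ht
    rw [uIcc_of_le hL.le] at hx
    simp only [eqOn_rectExtend ht hx]
  have initial_congr : ∫ x in (0 : ℝ)..L, rectExtend hT.le hL.le y 0 x ^ 2 =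
      ∫ x in (0 : ℝ)..L, y₀ x ^ 2 := intervalIntegral.integral_congr fun x hx => by
    rw [uIcc_of_le hL.le] at hx
    simp only [eqOn_rectExtend (left_mem_Icc.2 hT.le) hx, hy₀ hx]
  rw [initial_congr, intervalIntegral.integral_congr h1_congr] at hle
  exact ⟨hint.congr (h1_congr.mono uIoc_subset_uIcc), hle⟩

/-- there is `C > 0` such that for every `ε > 0`, every `T > 0`, every
initial datum `y₀` and every classical solution `y` of the modified KdV system with
`y(0,·) = y₀`, one has
`‖y‖²_{L²(0,T;H₀¹(0,L))} ≤ ((8T + 2L)/3) ‖y₀‖²_{L²(0,L)} + C T ‖y₀‖⁴_{L²(0,L)}`. -/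
theorem modifiedKdV_spacetime_H1_bound (L : ℝ) (hL : 0 < L)
    (Φ : ℝ → ℝ) (hΦ : IsCutoff Φ) :
    ∃ C > 0, ∀ ε > 0, ∀ T > 0, ∀ y₀ : ℝ → ℝ, ∀ y : ℝ → ℝ → ℝ,
      IsModifiedKdVSol L T ε Φ y → (∀ x ∈ Icc (0:ℝ) L, y 0 x = y₀ x) →
      (∫ t in (0:ℝ)..T, ∫ x in (0:ℝ)..L,
          ((y t x) ^ 2 + (derivWithin (y t) (Icc (0:ℝ) L) x) ^ 2))
        ≤ (8 * T + 2 * L) / 3 * (∫ x in (0:ℝ)..L, (y₀ x) ^ 2)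
          + C * T * (∫ x in (0:ℝ)..L, (y₀ x) ^ 2) ^ 2 := by
  refine ⟨4 * L * 1 ^ 2 / 81, by positivity, fun ε hε T hT y₀ y hy hy₀ =>
    (modifiedKdV_spacetime_H1_bound_general hL hT hε (hΦ.locallyLipschitzOn _)
      (fun r => hΦ.abs_le_one) hy hy₀).2.trans ?_⟩
  gcongr
  · exact integral_sq_nonneg hL.le y₀
  · norm_num
end
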